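/- arXiv:1212.2243 — 7 statements merged into one kernel-verified Lean document; each statement's English description precedes it below -/
import Mathlib

section
/- Let 𝔽 be a finite field and let C be a convolutional code of length n, dimension k and degree δ with a canonical generator matrix G(z) = G₀ + G₁z + ⋯ + G_δ z^δ (each G_i a k×n matrix over 𝔽). Let C⁰ be the linear block code in 𝔽ⁿ spanned over 𝔽 by the rows of the stacked ((δ+1)k)×n matrix (G_δ; G_{δ−1}; …; G₀), let ν be its dimension and μ its minimum Hamming distance. If ν = k(δ+1) (i.e. the stacked matrix has maximal rank), then d_free(C) = d^r_{l(C)}, where l(C) = ⌊(1/μ)·((n−k)(⌊δ/k⌋+1)+δ+1)⌋ − (δ+1). -/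
open Polynomial

/-- The weight of a vector of polynomials: the total number of nonzero coefficients. -/
noncomputable def polyWeight {F : Type*} [Field F] {n : ℕ} (c : Fin n → Polynomial F) : ℕ :=
  ∑ j, (c j).support.card

/-- The free distance of a submodule of `𝔽[z]ⁿ`: the minimal weight of a nonzero element. -/
noncomputable def freeDist {F : Type*} [Field F] {n : ℕ}
    (C : Submodule (Polynomial F) (Fin n → Polynomial F)) : ℕ :=
  sInf {d | ∃ c ∈ C, c ≠ 0 ∧ polyWeight c = d}

/-- The Hamming weight of a vector. -/
noncomputable def hammingWt {F : Type*} [Field F] {n : ℕ} (v : Fin n → F) : ℕ :=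
  Set.ncard {j | v j ≠ 0}

/-- The minimum distance of a linear block code. -/
noncomputable def minDist {F : Type*} [Field F] {n : ℕ} (C : Submodule F (Fin n → F)) : ℕ :=
  sInf {d | ∃ v ∈ C, v ≠ 0 ∧ hammingWt v = d}

/-- The `l`-th row distance of the convolutional code with generator matrix `G`. -/
noncomputable def rowDist {F : Type*} [Field F] {k n : ℕ}
    (G : Fin k → Fin n → Polynomial F) (l : ℕ) : ℕ :=
  sInf {d | ∃ α : Fin k → Polynomial F, α ≠ 0 ∧ (∀ i, (α i).natDegree ≤ l) ∧
    polyWeight (fun j => ∑ i, α i * G i j) = d}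

/-- The set of maximal (`k × k`) minors of a `k × n` polynomial matrix. -/
def maximalMinors {F : Type*} [Field F] {k n : ℕ} (G : Fin k → Fin n → Polynomial F) :
    Set (Polynomial F) :=
  {p | ∃ φ : Fin k ↪ Fin n, p = Matrix.det (Matrix.of fun i j => G i (φ j))}

/-- A generator matrix is basic when its maximal minors are coprime, i.e. generate the
unit ideal of `𝔽[z]`. -/
def IsBasic {F : Type*} [Field F] {k n : ℕ} (G : Fin k → Fin n → Polynomial F) : Prop :=
  Ideal.span (maximalMinors G) = ⊤

/-- The degree of the code: the highest degree of the maximal minors of a generator matrix. -/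
noncomputable def degCode {F : Type*} [Field F] {k n : ℕ}
    (G : Fin k → Fin n → Polynomial F) : ℕ :=
  sSup (Polynomial.natDegree '' maximalMinors G)

/-- The degree of the `i`-th row of a polynomial matrix. -/
noncomputable def rowDeg {F : Type*} [Field F] {k n : ℕ}
    (G : Fin k → Fin n → Polynomial F) (i : Fin k) : ℕ :=
  Finset.univ.sup fun j => (G i j).natDegree

/-- A generator matrix is reduced when the sum of its row degrees equals the maximal degree
of its maximal minors. -/
def IsReducedMatrix {F : Type*} [Field F] {k n : ℕ} (G : Fin k → Fin n → Polynomial F) : Prop :=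
  (∑ i, rowDeg G i) = degCode G

/-- A generator matrix is canonical when it is basic and reduced. -/
def IsCanonical {F : Type*} [Field F] {k n : ℕ} (G : Fin k → Fin n → Polynomial F) : Prop :=
  IsBasic G ∧ IsReducedMatrix G

/-- The `l`-th row distance is the free distance as soon as every nonzero input can be replaced,
without increasing the weight of the output, by a nonzero input of degree at most `l`. -/
theorem freeDist_eq_rowDist_of_forall_exists {F : Type*} [Field F] {k n : ℕ} (hk : 0 < k)
    (G : Fin k → Fin n → Polynomial F) (hind : LinearIndependent (Polynomial F) G) (l : ℕ)
    (h : ∀ α : Fin k → Polynomial F, α ≠ 0 → ∃ β : Fin k → Polynomial F, β ≠ 0 ∧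
      (∀ i, (β i).natDegree ≤ l) ∧
      polyWeight (fun j => ∑ i, β i * G i j) ≤ polyWeight (fun j => ∑ i, α i * G i j)) :
    freeDist (Submodule.span (Polynomial F) (Set.range G)) = rowDist G l := by
  have hsum : ∀ α : Fin k → Polynomial F, ∑ i, α i • G i = fun j => ∑ i, α i * G i j := by
    intro α
    ext1 j
    simp
  have hrow : ∃ d, d ∈ {d | ∃ α : Fin k → Polynomial F, α ≠ 0 ∧ (∀ i, (α i).natDegree ≤ l) ∧
      polyWeight (fun j => ∑ i, α i * G i j) = d} :=
    ⟨_, fun _ => 1, fun h0 => one_ne_zero (congrFun h0 ⟨0, hk⟩), fun i => by simp, rfl⟩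
  have hsub : rowDist G l ∈ {d | ∃ c ∈ Submodule.span (Polynomial F) (Set.range G), c ≠ 0 ∧
      polyWeight c = d} := by
    obtain ⟨α, hα, -, hw⟩ := Nat.sInf_mem hrow
    refine ⟨fun j => ∑ i, α i * G i j, ?_, ?_, hw⟩
    · exact (Submodule.mem_span_range_iff_exists_fun _).2 ⟨α, hsum α⟩
    · intro h0
      exact hα (funext (Fintype.linearIndependent_iff.1 hind α ((hsum α).trans h0)))
  apply le_antisymm
  · exact Nat.sInf_le hsub
  · obtain ⟨c, hc, hc0, hw⟩ := Nat.sInf_mem ⟨_, hsub⟩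
    obtain ⟨α, rfl⟩ := (Submodule.mem_span_range_iff_exists_fun _).1 hc
    obtain ⟨β, hβ, hdeg, hle⟩ := h α (by rintro rfl; simp at hc0)
    rw [← hsum α, hw] at hle
    refine le_trans (Nat.sInf_le ?_) hle
    exact ⟨β, hβ, hdeg, rfl⟩

theorem polyWeight_le_of_support_subset {F : Type*} [Field F] {n : ℕ} {c c' : Fin n → Polynomial F}
    (h : ∀ j, (c j).support ⊆ (c' j).support) : polyWeight c ≤ polyWeight c' :=
  Finset.sum_le_sum fun j _ => Finset.card_le_card (h j)

theorem polyWeight_le_polyWeight_X_mul {F : Type*} [Field F] {n : ℕ} (c : Fin n → Polynomial F) :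
    polyWeight c ≤ polyWeight (fun j => X * c j) := by
  refine Finset.sum_le_sum fun j _ => ?_
  refine Finset.card_le_card_of_injOn Nat.succ (fun m hm => ?_) (Nat.succ_injective.injOn)
  simpa [Polynomial.coeff_X_mul] using hm

theorem sum_hammingWt_coeff_le_polyWeight {F : Type*} [Field F] {n : ℕ} (c : Fin n → Polynomial F)
    (S : Finset ℕ) : ∑ m ∈ S, hammingWt (fun j => (c j).coeff m) ≤ polyWeight c := by
  classical
  have hcard : ∀ m, hammingWt (fun j => (c j).coeff m) =
      ∑ j, if (c j).coeff m ≠ 0 then 1 else 0 := by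
    intro m
    rw [hammingWt, ← Finset.card_filter, ← Set.ncard_coe_finset]
    simp
  simp_rw [hcard]
  rw [Finset.sum_comm]
  refine Finset.sum_le_sum fun j _ => ?_
  rw [← Finset.card_filter]
  refine Finset.card_le_card fun m hm => ?_
  simpa using (Finset.mem_filter.1 hm).2

theorem minDist_le_hammingWt {F : Type*} [Field F] {n : ℕ} {C : Submodule F (Fin n → F)}
    {v : Fin n → F} (hv : v ∈ C) (h0 : v ≠ 0) : minDist C ≤ hammingWt v :=
  Nat.sInf_le ⟨v, hv, h0, rfl⟩

theorem minDist_pos {F : Type*} [Field F] {n : ℕ} {C : Submodule F (Fin n → F)}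
    (h : C ≠ ⊥) : 0 < minDist C := by
  obtain ⟨w, hw, hw0⟩ := C.ne_bot_iff.1 h
  obtain ⟨v, -, hv0, hd⟩ := Nat.sInf_mem (s := {d | ∃ v ∈ C, v ≠ 0 ∧ hammingWt v = d})
    ⟨_, w, hw, hw0, rfl⟩
  rw [minDist, ← hd, hammingWt, Set.ncard_pos]
  exact Function.ne_iff.1 hv0

theorem coeff_mul_sum_C_mul_X_pow {F : Type*} [Field F] {N : ℕ} (a : Fin N → F)
    (α : Polynomial F) (m : ℕ) :
    (α * ∑ d : Fin N, C (a d) * X ^ (d : ℕ)).coeff m =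
      ∑ d : Fin N, (if (d : ℕ) ≤ m then α.coeff (m - d) else 0) * a d := by
  rw [Finset.mul_sum, Polynomial.finsetSum_coeff]
  refine Finset.sum_congr rfl fun d _ => ?_
  rw [← mul_assoc, Polynomial.coeff_mul_X_pow', Polynomial.coeff_mul_C]
  split_ifs <;> simp

section SingleRow

variable {F : Type*} [Field F] {n δ : ℕ} {a : Fin (δ + 1) → Fin n → F} {g : Fin n → Polynomial F}

theorem coeff_mul_eq_sum_smul (hg : ∀ j, g j = ∑ d : Fin (δ + 1), C (a d j) * X ^ (d : ℕ))
    (α : Polynomial F) (m : ℕ) :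
    (fun j => (α * g j).coeff m) =
      ∑ d : Fin (δ + 1), (if (d : ℕ) ≤ m then α.coeff (m - d) else 0) • a d := by
  ext j
  rw [hg, coeff_mul_sum_C_mul_X_pow]
  simp only [Finset.sum_apply, Pi.smul_apply, smul_eq_mul]

/-- Every nonzero input to a single-row encoder with linearly independent coefficient vectors can
be replaced by one whose output is at most as heavy and has no vanishing coefficient vector. -/
theorem exists_forall_coeff_ne_zero (ha : LinearIndependent F a)
    (hg : ∀ j, g j = ∑ d : Fin (δ + 1), C (a d j) * X ^ (d : ℕ))
    (α : Polynomial F) (hα : α ≠ 0) :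
    ∃ β : Polynomial F, β ≠ 0 ∧
      polyWeight (fun j => β * g j) ≤ polyWeight (fun j => α * g j) ∧
      ∀ m ≤ β.natDegree + δ, (fun j => (β * g j).coeff m) ≠ 0 := by
  induction hN : α.natDegree using Nat.strong_induction_on generalizing α with
  | _ N ih =>
  subst hN
  by_cases h0 : α.coeff 0 = 0
  · have hX : X * α.divX = α := by
      simpa [h0] using Polynomial.X_mul_divX_add α
    have hdiv : α.divX ≠ 0 := by
      intro h
      rw [h, mul_zero] at hX
      exact hα hX.symm
    have hlt : α.divX.natDegree < α.natDegree := by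
      conv_rhs => rw [← hX, Polynomial.natDegree_X_mul hdiv]
      exact Nat.lt_succ_self _
    obtain ⟨β, hβ, hw, hm⟩ := ih _ hlt _ hdiv rfl
    refine ⟨β, hβ, hw.trans ?_, hm⟩
    refine (polyWeight_le_polyWeight_X_mul _).trans_eq ?_
    simp_rw [← mul_assoc, hX]
  by_cases hall : ∀ m ≤ α.natDegree + δ, (fun j => (α * g j).coeff m) ≠ 0
  · exact ⟨α, hα, le_rfl, hall⟩
  push Not at hall
  obtain ⟨m, hm, hvm⟩ := hall
  rw [coeff_mul_eq_sum_smul hg] at hvm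
  have hgap : ∀ d ≤ δ, d ≤ m → α.coeff (m - d) = 0 := by
    intro d hd hdm
    have := Fintype.linearIndependent_iff.1 ha _ hvm ⟨d, by omega⟩
    simpa [hdm] using this
  have hδm : δ < m := by
    by_contra hlt
    exact h0 (by simpa using hgap m (by omega) le_rfl)
  let β : Polynomial F := ∑ i ∈ Finset.range (m - δ), Polynomial.monomial i (α.coeff i)
  have hβc : ∀ i, β.coeff i = if i < m - δ then α.coeff i else 0 := by
    intro i
    simp [β, Polynomial.finsetSum_coeff, Polynomial.coeff_monomial]
  have hβ0 : β ≠ 0 := by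
    intro h
    have := hβc 0
    rw [if_pos (by omega), h] at this
    exact h0 this.symm
  have hβdeg : β.natDegree < α.natDegree := by
    have : β.natDegree < m - δ := by
      by_contra hle
      have := hβc β.natDegree
      rw [if_neg hle] at this
      exact hβ0 (Polynomial.leadingCoeff_eq_zero.1 this)
    omega
  have hβw : polyWeight (fun j => β * g j) ≤ polyWeight (fun j => α * g j) := by
    refine polyWeight_le_of_support_subset fun j p hp => ?_
    rw [Polynomial.mem_support_iff] at hp ⊢
    rw [hg, coeff_mul_sum_C_mul_X_pow] at hp ⊢
    by_cases hpm : p < m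
    · convert hp using 4 with d
      rw [hβc]
      split_ifs with hlt
      · rfl
      · have := hgap (m - (p - d)) (by omega) (by omega)
        rwa [show m - (m - (p - d)) = p - d by omega] at this
    · refine absurd (Finset.sum_eq_zero fun d _ => ?_) hp
      have := d.2
      have hβz : β.coeff (p - d) = 0 := by rw [hβc, if_neg (by omega)]
      simp [hβz]
  obtain ⟨γ, hγ, hw, hm⟩ := ih _ hβdeg _ hβ0 rfl
  exact ⟨γ, hγ, hw.trans hβw, hm⟩

theorem exists_natDegree_le_polyWeight_le (ha : LinearIndependent F a)
    (hg : ∀ j, g j = ∑ d : Fin (δ + 1), C (a d j) * X ^ (d : ℕ))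
    (α : Polynomial F) (hα : α ≠ 0) :
    ∃ β : Polynomial F, β ≠ 0 ∧
      β.natDegree ≤ n * (δ + 1) / minDist (Submodule.span F (Set.range a)) - (δ + 1) ∧
      polyWeight (fun j => β * g j) ≤ polyWeight (fun j => α * g j) := by
  by_cases hbig : n * (δ + 1) ≤ polyWeight (fun j => α * g j)
  · refine ⟨1, one_ne_zero, by simp, le_trans ?_ hbig⟩
    have hle : ∀ j ∈ Finset.univ, (1 * g j).support.card ≤ δ + 1 := by
      intro j _
      rw [← Finset.card_range (δ + 1)]
      refine Finset.card_le_card fun m hm => ?_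
      rw [Polynomial.mem_support_iff, hg, coeff_mul_sum_C_mul_X_pow] at hm
      obtain ⟨d, -, hd⟩ := Finset.exists_ne_zero_of_sum_ne_zero hm
      have := d.2
      by_contra hlt
      rw [Finset.mem_range] at hlt
      have h1 : (1 : Polynomial F).coeff (m - d) = 0 := by
        rw [Polynomial.coeff_one, if_neg (by omega)]
      exact hd (by simp [h1])
    simpa [polyWeight] using Finset.sum_le_card_nsmul _ _ _ hle
  · obtain ⟨β, hβ, hw, hne⟩ := exists_forall_coeff_ne_zero ha hg α hα
    refine ⟨β, hβ, ?_, hw⟩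
    have hpos : 0 < minDist (Submodule.span F (Set.range a)) := by
      refine minDist_pos (Submodule.ne_bot_iff _ |>.2 ⟨a 0, ?_, ha.ne_zero 0⟩)
      exact Submodule.subset_span ⟨0, rfl⟩
    have hterm : ∀ m ∈ Finset.range (β.natDegree + δ + 1),
        minDist (Submodule.span F (Set.range a)) ≤
          hammingWt (fun j => (β * g j).coeff m) := by
      intro m hm
      refine minDist_le_hammingWt ?_ (hne m (by simpa [Nat.lt_succ_iff] using hm))
      rw [coeff_mul_eq_sum_smul hg]
      exact Submodule.sum_mem _ fun d _ =>
        Submodule.smul_mem _ _ (Submodule.subset_span ⟨d, rfl⟩)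
    have hsum := (Finset.card_nsmul_le_sum _ _ _ hterm).trans
      (sum_hammingWt_coeff_le_polyWeight _ _)
    rw [Finset.card_range, smul_eq_mul] at hsum
    have : β.natDegree + δ + 1 ≤ n * (δ + 1) / minDist (Submodule.span F (Set.range a)) :=
      (Nat.le_div_iff_mul_le hpos).2 (by omega)
    omega

end SingleRow

/-- For a constant generator matrix, a nonzero coefficient of the input gives a constant input
whose output is at most as heavy. -/
theorem exists_const_polyWeight_le {F : Type*} [Field F] {k n : ℕ} {a : Fin k → Fin n → F}
    {G : Fin k → Fin n → Polynomial F} (hG : ∀ i j, G i j = C (a i j))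
    (α : Fin k → Polynomial F) (hα : α ≠ 0) :
    ∃ β : Fin k → Polynomial F, β ≠ 0 ∧ (∀ i, (β i).natDegree = 0) ∧
      polyWeight (fun j => ∑ i, β i * G i j) ≤ polyWeight (fun j => ∑ i, α i * G i j) := by
  obtain ⟨i₀, hi₀⟩ := Function.ne_iff.1 hα
  let m := (α i₀).natDegree
  refine ⟨fun i => C ((α i).coeff m), fun h => ?_, fun i => Polynomial.natDegree_C _, ?_⟩
  · exact hi₀ (Polynomial.leadingCoeff_eq_zero.1 (Polynomial.C_eq_zero.1 (congrFun h i₀)))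
  · refine Finset.sum_le_sum fun j _ => ?_
    have hC : ∑ i, C ((α i).coeff m) * G i j = C ((∑ i, α i * G i j).coeff m) := by
      simp [hG, Polynomial.finsetSum_coeff, Polynomial.coeff_mul_C]
    dsimp only
    rw [hC]
    by_cases h0 : (∑ i, α i * G i j).coeff m = 0
    · simp [h0]
    · rw [Polynomial.support_C h0, Finset.card_singleton, Nat.one_le_iff_ne_zero,
        Finset.card_ne_zero]
      exact ⟨m, Polynomial.mem_support_iff.2 h0⟩

/-- A reduced matrix of degree `δ` whose rows all have a nonzero coefficient vector at degree `δ`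
is constant or has a single row. -/
theorem eq_one_or_degree_eq_zero_of_isReducedMatrix {F : Type*} [Field F] {k n δ : ℕ} (hk : 0 < k)
    {G : Fin k → Fin n → Polynomial F} (hred : IsReducedMatrix G) (hdeg : degCode G = δ)
    (htop : ∀ i, (fun j => (G i j).coeff δ) ≠ 0) : k = 1 ∨ δ = 0 := by
  have hrow : ∀ i ∈ Finset.univ, δ ≤ rowDeg G i := by
    intro i _
    obtain ⟨j, hj⟩ := Function.ne_iff.1 (htop i)
    exact (Polynomial.le_natDegree_of_ne_zero hj).trans
      (Finset.le_sup (f := fun j => (G i j).natDegree) (Finset.mem_univ j))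
  have hle := Finset.card_nsmul_le_sum _ _ _ hrow
  rw [hred, hdeg, Finset.card_univ, Fintype.card_fin, smul_eq_mul] at hle
  by_contra! h
  have h2 : 2 ≤ k := by omega
  have := Nat.mul_le_mul_right δ h2
  omega

/-- For a convolutional code with a canonical generator matrix
`G(z) = G₀ + G₁ z + ⋯ + G_δ z^δ` of degree `δ` such that the stacked matrix
`(G_δ; …; G₀)` has maximal rank `k(δ+1)`, the free distance equals the `l(C)`-th
row distance, where `l(C) = ⌊((n-k)(⌊δ/k⌋+1)+δ+1)/μ⌋ - (δ+1)` and `μ` is the minimum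
distance of the block code `C⁰` spanned by the rows of the stacked matrix. -/
theorem freeDist_eq_rowDist {F : Type*} [Field F] [Fintype F] {k n δ : ℕ} (hk : 0 < k)
    (G : Fin k → Fin n → Polynomial F)
    (Gc : Fin (δ + 1) → Fin k → Fin n → F)
    (hG : ∀ i j, G i j = ∑ d : Fin (δ + 1), Polynomial.C (Gc d i j) * Polynomial.X ^ (d : ℕ))
    (hcan : IsCanonical G) (hdeg : degCode G = δ)
    (hind : LinearIndependent (Polynomial F) G)
    (C0 : Submodule F (Fin n → F))
    (hC0 : C0 = Submodule.span F (Set.range fun p : Fin (δ + 1) × Fin k => Gc p.1 p.2))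
    (hν : Module.finrank F C0 = k * (δ + 1))
    (μ : ℕ) (hμ : μ = minDist C0) :
    freeDist (Submodule.span (Polynomial F) (Set.range G)) =
      rowDist G (((n - k) * (δ / k + 1) + δ + 1) / μ - (δ + 1)) := by
  have hli : LinearIndependent F (fun p : Fin (δ + 1) × Fin k => Gc p.1 p.2) := by
    rw [linearIndependent_iff_card_eq_finrank_span, Set.finrank, ← hC0, hν]
    simp [mul_comm]
  have htop : ∀ i, (fun j => (G i j).coeff δ) ≠ 0 := by
    intro i
    have hcoeff : (fun j => (G i j).coeff δ) = Gc (Fin.last δ) i := by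
      ext j
      rw [hG, Polynomial.finsetSum_coeff, Finset.sum_eq_single (Fin.last δ)]
      · simp
      · intro d _ hd
        rw [Polynomial.coeff_C_mul_X_pow, if_neg]
        exact fun h => hd (Fin.ext h.symm)
      · simp
    rw [hcoeff]
    exact hli.ne_zero (Fin.last δ, i)
  refine freeDist_eq_rowDist_of_forall_exists hk G hind _ fun α hα => ?_
  rcases eq_one_or_degree_eq_zero_of_isReducedMatrix hk hcan.2 hdeg htop with rfl | rfl
  · have ha : LinearIndependent F (fun d => Gc d 0) :=
      hli.comp (fun d => (d, 0)) fun d e h => congrArg Prod.fst h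
    have hspan : C0 = Submodule.span F (Set.range fun d => Gc d 0) := by
      rw [hC0]
      congr 1
      ext v
      simp
    have hn : n ≠ 0 := by
      rintro rfl
      exact htop 0 (Subsingleton.elim _ _)
    have hbound : (n - 1) * (δ / 1 + 1) + δ + 1 = n * (δ + 1) := by
      obtain ⟨n, rfl⟩ := Nat.exists_eq_succ_of_ne_zero hn
      simp only [Nat.succ_eq_add_one, Nat.add_sub_cancel, Nat.div_one]
      ring
    have hα0 : α 0 ≠ 0 := fun h => hα (funext fun i => by rw [Subsingleton.elim i 0, h]; rfl)
    obtain ⟨β, hβ, hl, hw⟩ := exists_natDegree_le_polyWeight_le ha (hG 0) (α 0) hα0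
    refine ⟨fun _ => β, fun h => hβ (congrFun h 0), fun _ => ?_, by simpa using hw⟩
    rwa [hbound, hμ, hspan]
  · obtain ⟨β, hβ, hl, hw⟩ := exists_const_polyWeight_le (a := Gc 0) (by simpa using hG) α hα
    exact ⟨β, hβ, fun i => (hl i).le.trans (Nat.zero_le _), hw⟩
end

section
/- Let 𝔽 ↪ 𝔽′ be an extension of finite fields and let G(z) be a k×n matrix over 𝔽[z] whose rows are linearly independent over 𝔽(z). Let C ⊆ 𝔽[z]ⁿ be the 𝔽[z]-submodule spanned by the rows of G(z), and let C′ ⊆ 𝔽′[z]ⁿ be the 𝔽′[z]-submodule spanned by the rows of G(z). Then d_free(C) = d_free(C′); that is, the free distance of a convolutional code is preserved by enlargements of the alphabet. -/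
open Polynomial

namespace Polynomial

/-- A linear functional `F' → F` applied to every coefficient of a polynomial over `F'`. -/
noncomputable def mapCoeffs {F F' : Type*} [Field F] [Field F'] [Algebra F F']
    (l : F' →ₗ[F] F) : F'[X] →+ F[X] where
  toFun p := ∑ i ∈ p.support, monomial i (l (p.coeff i))
  map_zero' := by simp
  map_add' p q := by
    ext m
    simp only [finsetSum_coeff, coeff_monomial, coeff_add]
    by_cases hp : p.coeff m = 0 <;> by_cases hq : q.coeff m = 0 <;>
      by_cases hpq : p.coeff m + q.coeff m = 0 <;> simp_all [← map_add]

variable {F F' : Type*} [Field F] [Field F'] [Algebra F F'] (l : F' →ₗ[F] F)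

@[simp]
theorem coeff_mapCoeffs (p : F'[X]) (m : ℕ) : (mapCoeffs l p).coeff m = l (p.coeff m) := by
  simp only [mapCoeffs, AddMonoidHom.coe_mk, ZeroHom.coe_mk, finsetSum_coeff, coeff_monomial]
  by_cases hp : p.coeff m = 0 <;> simp [hp]

theorem mapCoeffs_mul_map (p : F'[X]) (g : F[X]) :
    mapCoeffs l (p * g.map (algebraMap F F')) = mapCoeffs l p * g := by
  ext m
  simp only [coeff_mapCoeffs, coeff_mul, map_sum, coeff_map]
  refine Finset.sum_congr rfl fun x _ => ?_
  rw [mul_comm, ← Algebra.smul_def, map_smul, smul_eq_mul, mul_comm]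

theorem support_mapCoeffs_subset (p : F'[X]) : (mapCoeffs l p).support ⊆ p.support := by
  intro m
  simp only [mem_support_iff, coeff_mapCoeffs]
  exact mt fun h => by rw [h, map_zero]

end Polynomial

theorem polyWeight_map {F F' : Type*} [Field F] [Field F'] [Algebra F F'] {n : ℕ}
    (c : Fin n → F[X]) :
    polyWeight (fun j => (c j).map (algebraMap F F')) = polyWeight c := by
  simp only [polyWeight, support_map_of_injective _ (algebraMap F F').injective]

theorem polyWeight_mapCoeffs_le {F F' : Type*} [Field F] [Field F'] [Algebra F F'] {n : ℕ}
    (l : F' →ₗ[F] F) (c : Fin n → F'[X]) :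
    polyWeight (fun j => mapCoeffs l (c j)) ≤ polyWeight c :=
  Finset.sum_le_sum fun j _ => Finset.card_le_card (support_mapCoeffs_subset l (c j))

theorem map_mem_span_baseChange {F F' : Type*} [Field F] [Field F'] [Algebra F F'] {k n : ℕ}
    (G : Fin k → Fin n → F[X]) {c : Fin n → F[X]}
    (hc : c ∈ Submodule.span F[X] (Set.range G)) :
    (fun j => (c j).map (algebraMap F F')) ∈ Submodule.span F'[X]
      (Set.range fun i => fun j => (G i j).map (algebraMap F F')) := by
  rw [Submodule.mem_span_range_iff_exists_fun] at hc ⊢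
  obtain ⟨a, rfl⟩ := hc
  refine ⟨fun i => (a i).map (algebraMap F F'), ?_⟩
  ext1 j
  simp [Polynomial.map_sum]

theorem mapCoeffs_mem_span {F F' : Type*} [Field F] [Field F'] [Algebra F F'] {k n : ℕ}
    (l : F' →ₗ[F] F) (G : Fin k → Fin n → F[X]) {c : Fin n → F'[X]}
    (hc : c ∈ Submodule.span F'[X]
      (Set.range fun i => fun j => (G i j).map (algebraMap F F'))) :
    (fun j => mapCoeffs l (c j)) ∈ Submodule.span F[X] (Set.range G) := by
  rw [Submodule.mem_span_range_iff_exists_fun] at hc ⊢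
  obtain ⟨a, rfl⟩ := hc
  refine ⟨fun i => mapCoeffs l (a i), ?_⟩
  ext1 j
  simp [mapCoeffs_mul_map]

/-- Some coefficientwise linear functional does not annihilate a given nonzero vector. -/
theorem exists_mapCoeffs_ne_zero (F : Type*) {F' : Type*} [Field F] [Field F'] [Algebra F F']
    {n : ℕ} {c : Fin n → F'[X]} (hc : c ≠ 0) :
    ∃ l : F' →ₗ[F] F, (fun j => mapCoeffs l (c j)) ≠ 0 := by
  obtain ⟨j, hj⟩ := Function.ne_iff.mp hc
  obtain ⟨m, hm⟩ : ∃ m, (c j).coeff m ≠ 0 := by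
    contrapose! hj
    ext m
    simpa using hj m
  obtain ⟨l, hl⟩ : ∃ l : Module.Dual F F', l ((c j).coeff m) ≠ 0 := by
    contrapose! hm
    exact (Module.forall_dual_apply_eq_zero_iff F _).mp hm
  refine ⟨l, fun h => hl ?_⟩
  rw [← coeff_mapCoeffs, congrFun h j, Pi.zero_apply, coeff_zero]

theorem Nat.sInf_eq_of_subset_of_forall_exists_le {S T : Set ℕ} (hST : S ⊆ T)
    (hTS : ∀ t ∈ T, ∃ s ∈ S, s ≤ t) : sInf S = sInf T := by
  rcases T.eq_empty_or_nonempty with rfl | hT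
  · rw [Set.subset_empty_iff.mp hST]
  · obtain ⟨s, hs, hle⟩ := hTS _ (Nat.sInf_mem hT)
    exact le_antisymm ((Nat.sInf_le hs).trans hle) (Nat.sInf_le (hST (Nat.sInf_mem ⟨s, hs⟩)))

/-- The free distance of a convolutional code is preserved by
enlargements of the alphabet: if `𝔽 ↪ 𝔽′` is an extension of finite fields and `C`, `C′`
are the codes spanned by the rows of `G(z)` over `𝔽[z]` and `𝔽′[z]` respectively, then
`d_free(C) = d_free(C′)`. -/
theorem freeDist_baseChange {F F' : Type*} [Field F] [Fintype F] [Field F'] [Fintype F']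
    [Algebra F F'] {k n : ℕ}
    (G : Fin k → Fin n → Polynomial F)
    (hind : LinearIndependent (Polynomial F) G) :
    freeDist (Submodule.span (Polynomial F) (Set.range G)) =
      freeDist (Submodule.span (Polynomial F')
        (Set.range fun i => fun j => (G i j).map (algebraMap F F'))) := by
  refine Nat.sInf_eq_of_subset_of_forall_exists_le ?_ ?_
  · rintro d ⟨c, hc, hc0, rfl⟩
    refine ⟨_, map_mem_span_baseChange G hc, fun h => hc0 ?_, polyWeight_map c⟩
    ext1 j
    exact (Polynomial.map_eq_zero (algebraMap F F')).mp (congrFun h j)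
  · rintro d ⟨c, hc, hc0, rfl⟩
    obtain ⟨l, hl⟩ := exists_mapCoeffs_ne_zero F hc0
    exact ⟨_, ⟨_, mapCoeffs_mem_span l G hc, hl, rfl⟩, polyWeight_mapCoeffs_le l c⟩
end

section
/- Let 𝔽 be a finite field with algebraic closure 𝔽̄, let 𝒢(z) be a k×n matrix with entries in 𝔽[λ₀,…,λ_r][z], and for α ∈ 𝔽̄^{r+1} let 𝒢_α(z) denote the k×n matrix over 𝔽̄[z] obtained by evaluating λ_i ↦ α_i. Let U ⊆ 𝔽̄^{r+1} be a Zariski open subset such that for every α ∈ U the rows of 𝒢_α(z) are linearly independent over 𝔽̄(z), and let C_α ⊆ 𝔽̄[z]ⁿ be the 𝔽̄[z]-submodule spanned by the rows of 𝒢_α(z). Then for every integer N the set {α ∈ U : d_free(C_α) ≤ N} is Zariski closed in U; equivalently, the function α ↦ d_free(C_α) is lower semicontinuous on U for the Zariski topology. -/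
open Polynomial

namespace Matrix

theorem exists_submatrix_det_ne_zero {K ι κ : Type*} [Field K] [Fintype κ] [DecidableEq κ]
    (M : ι → κ → K) (hM : ∀ x : κ → K, (∀ i, ∑ j, M i j * x j = 0) → x = 0) :
    ∃ f : κ → ι, (Matrix.of fun a b => M (f a) b).det ≠ 0 := by
  have hspan : Submodule.span K (Set.range M) = ⊤ := by
    by_contra hne
    obtain ⟨g, hg, hle⟩ := Submodule.exists_le_ker_of_lt_top _ (lt_top_iff_ne_top.2 hne)
    have hx := hM (fun j => g fun l => if j = l then 1 else 0) fun i => by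
      have hi : g (M i) = 0 := hle (Submodule.subset_span ⟨i, rfl⟩)
      rwa [LinearMap.pi_apply_eq_sum_univ] at hi
    refine hg (LinearMap.ext fun v => ?_)
    rw [LinearMap.pi_apply_eq_sum_univ]
    exact Finset.sum_eq_zero fun j _ => by rw [congrFun hx j, Pi.zero_apply, smul_zero]
  obtain ⟨κ', a, -, hsp, hli⟩ := exists_linearIndependent' K M
  rw [hspan] at hsp
  let b := Module.Basis.mk hli hsp.ge
  let e := (Pi.basisFun K κ).indexEquiv b
  refine ⟨a ∘ e, ?_⟩
  have : LinearIndependent K (Matrix.of fun i j => M ((a ∘ e) i) j).row := hli.comp e e.injective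
  rw [Matrix.linearIndependent_rows_iff_isUnit, Matrix.isUnit_iff_isUnit_det] at this
  exact this.ne_zero

theorem exists_submatrix_det_ne_zero_of_linearIndependent {R ι κ : Type*} [CommRing R] [IsDomain R]
    [Fintype κ] [DecidableEq κ] (G : Matrix κ ι R)
    (hG : ∀ x : κ → R, x ᵥ* G = 0 → x = 0) :
    ∃ f : κ → ι, (G.submatrix id f).det ≠ 0 := by
  obtain ⟨f, hf⟩ := exists_submatrix_det_ne_zero
    (fun i j => algebraMap R (FractionRing R) (G j i)) fun x hx => by
      obtain ⟨b, hb⟩ := IsLocalization.exist_integer_multiples_of_finite (nonZeroDivisors R) x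
      choose y hy using hb
      have hinj := IsFractionRing.injective R (FractionRing R)
      have hb0 : algebraMap R (FractionRing R) b ≠ 0 := by
        simp
      have hy0 : y = 0 := hG y <| funext fun i => hinj <| by
        simp only [vecMul, dotProduct, map_sum, map_mul, hy, Pi.zero_apply, map_zero]
        rw [← mul_zero (algebraMap R (FractionRing R) b), ← hx i, Finset.mul_sum]
        exact Finset.sum_congr rfl fun j _ => by rw [Algebra.smul_def]; ring
      funext j
      have := hy j
      rw [hy0, Pi.zero_apply, map_zero, Algebra.smul_def] at this
      exact (mul_eq_zero.1 this.symm).resolve_left hb0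
  refine ⟨f, fun h0 => hf ?_⟩
  have := congrArg (algebraMap R (FractionRing R)) h0
  rw [RingHom.map_det, map_zero, ← det_transpose] at this
  exact this
end Matrix

theorem Polynomial.exists_dvd_X_pow_sub_X_pow {F K : Type*} [Field F] [Finite F] [Field K]
    [Algebra F K] [Algebra.IsAlgebraic F K] (p : K[X]) (hp : p ≠ 0) :
    ∃ i j : ℕ, i < j ∧ p ∣ X ^ j - X ^ i := by
  let E := IntermediateField.adjoin F (p.coeffs : Set K)
  have : FiniteDimensional F E := IntermediateField.finiteDimensional_adjoin
    fun x _ => Algebra.IsIntegral.isIntegral x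
  have : Finite E := Module.finite_of_finite F
  have hl : p ∈ lifts (algebraMap E K) := by
    rw [lifts_iff_coeff_lifts]
    intro m
    by_cases h : p.coeff m = 0
    · exact ⟨0, by simp [h]⟩
    · exact ⟨⟨p.coeff m, IntermediateField.subset_adjoin _ _ (coeff_mem_coeffs h)⟩, rfl⟩
  obtain ⟨q, hqp⟩ := (mem_lifts _).1 hl
  have hq : q ≠ 0 := fun h => hp (by simp [← hqp, h])
  have : Module.Finite E (AdjoinRoot q) := (AdjoinRoot.powerBasis hq).finite
  have : Finite (AdjoinRoot q) := Module.finite_of_finite E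
  obtain ⟨i, j, hij, he⟩ := Finite.exists_ne_map_eq_of_infinite
    fun m : ℕ => AdjoinRoot.mk q (X ^ m)
  wlog hlt : i < j generalizing i j
  · exact this j i hij.symm he.symm (lt_of_le_of_ne (not_lt.1 hlt) hij.symm)
  refine ⟨i, j, hlt, ?_⟩
  have := AdjoinRoot.mk_eq_mk.1 he.symm
  simpa [hqp] using Polynomial.map_dvd (algebraMap E K) this

/-- The predicate `P` on affine space cuts out a Zariski closed set. -/
def IsZariskiClosed {σ K : Type*} [Field K] (P : (σ → K) → Prop) : Prop :=
  ∃ s : Set (MvPolynomial σ K), ∀ α, P α ↔ ∀ p ∈ s, MvPolynomial.eval α p = 0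

namespace IsZariskiClosed
variable {σ K : Type*} [Field K]

theorem exists_finset [Finite σ] {P : (σ → K) → Prop} (h : IsZariskiClosed P) :
    ∃ s : Finset (MvPolynomial σ K), ∀ α, P α ↔ ∀ p ∈ s, MvPolynomial.eval α p = 0 := by
  obtain ⟨s, hs⟩ := h
  obtain ⟨t, hts, ht⟩ := (Submodule.fg_span_iff_fg_span_finset_subset s).1
    (IsNoetherian.noetherian (Ideal.span s))
  refine ⟨t, fun α => (hs α).trans ⟨fun h p hp => h p (hts hp), fun h p hp => ?_⟩⟩
  have hle : Ideal.span (t : Set (MvPolynomial σ K)) ≤ RingHom.ker (MvPolynomial.eval α) :=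
    Ideal.span_le.2 fun q hq => h q hq
  exact hle (ht.le (Submodule.subset_span hp))

theorem const (p : Prop) : IsZariskiClosed fun _ : σ → K => p := by
  by_cases hp : p
  · exact ⟨∅, by simp [hp]⟩
  · exact ⟨{1}, by simp [hp]⟩

theorem or {P Q : (σ → K) → Prop} (hP : IsZariskiClosed P) (hQ : IsZariskiClosed Q) :
    IsZariskiClosed fun α => P α ∨ Q α := by
  obtain ⟨s, hs⟩ := hP
  obtain ⟨t, ht⟩ := hQ
  refine ⟨{f | ∃ p ∈ s, ∃ q ∈ t, f = p * q}, fun α => ?_⟩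
  simp only [hs, ht]
  constructor
  · rintro (h | h) _ ⟨p, hp, q, hq, rfl⟩
    · simp [h p hp]
    · simp [h q hq]
  · intro h
    by_contra! hne
    obtain ⟨⟨p, hp, hp0⟩, q, hq, hq0⟩ := hne
    have := h _ ⟨p, hp, q, hq, rfl⟩
    rw [map_mul] at this
    exact mul_ne_zero hp0 hq0 this

theorem exists_mem {ι : Type*} (T : Finset ι) {P : ι → (σ → K) → Prop}
    (hP : ∀ i ∈ T, IsZariskiClosed (P i)) : IsZariskiClosed fun α => ∃ i ∈ T, P i α := by
  classical
  induction T using Finset.induction_on with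
  | empty => simpa using const False
  | insert a T _ ih =>
    simpa using (hP a (by simp)).or (ih fun i hi => hP i (by simp [hi]))

theorem exists_ne_zero {F : Type*} [Field F] [Algebra F K] {ι κ : Type*} [Fintype κ]
    (L : ι → κ → MvPolynomial σ F) :
    IsZariskiClosed fun α : σ → K =>
      ∃ x : κ → K, x ≠ 0 ∧ ∀ i, ∑ j, MvPolynomial.aeval α (L i j) * x j = 0 := by
  classical
  refine ⟨Set.range fun f : κ → ι => MvPolynomial.map (algebraMap F K)
    (Matrix.of fun a b => L (f a) b).det, fun α => ?_⟩
  have hdet (f : κ → ι) : MvPolynomial.eval α (MvPolynomial.map (algebraMap F K)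
      (Matrix.of fun a b => L (f a) b).det) =
      (Matrix.of fun a b => MvPolynomial.aeval α (L (f a) b)).det := by
    rw [MvPolynomial.eval_map, ← MvPolynomial.aeval_def, AlgHom.map_det]
    rfl
  simp only [Set.forall_mem_range, hdet]
  constructor
  · rintro ⟨x, hx, h⟩ f
    exact Matrix.exists_mulVec_eq_zero_iff.1 ⟨x, hx, funext fun a => h (f a)⟩
  · intro h
    by_contra! hne
    obtain ⟨f, hf⟩ := Matrix.exists_submatrix_det_ne_zero
      (fun i j => MvPolynomial.aeval α (L i j)) fun x hx => by
        by_contra hx0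
        obtain ⟨i, hi⟩ := hne x hx0
        exact hi (hx i)
    exact hf (h f)
end IsZariskiClosed

theorem Finset.exists_gap {N D m : ℕ} (W : Finset ℕ) (hW : W.card ≤ N)
    (hmB : (N + 1) * (D + 1) ≤ m) :
    ∃ t, t + D + 1 ≤ m ∧ ∀ w ∈ W, w < t ∨ t + D + 1 ≤ w := by
  by_contra! hne
  have hsub : Finset.range (N + 1) ⊆ W.image (· / (D + 1)) := fun i hi => by
    have hi' : i + 1 ≤ N + 1 := Finset.mem_range.1 hi
    have hle : (i + 1) * (D + 1) ≤ (N + 1) * (D + 1) := Nat.mul_le_mul_right _ hi'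
    obtain ⟨w, hw, h1, h2⟩ := hne (i * (D + 1)) (by linarith)
    refine Finset.mem_image.2 ⟨w, hw, ?_⟩
    exact Nat.div_eq_of_lt_le h1 (by linarith)
  have := (Finset.card_le_card hsub).trans Finset.card_image_le
  rw [Finset.card_range] at this
  omega

theorem Polynomial.exists_split_at {R : Type*} [CommRing R] (p : R[X]) (T : ℕ) :
    ∃ q s : R[X], p = q + X ^ T * s ∧ (∀ m, q.coeff m = if m < T then p.coeff m else 0) ∧
      (∀ m, s.coeff m = p.coeff (m + T)) ∧
      q.support.card + s.support.card = p.support.card := by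
  have hq (m : ℕ) : (∑ i ∈ Finset.range T, monomial i (p.coeff i)).coeff m =
      if m < T then p.coeff m else 0 := by
    simp [finsetSum_coeff, coeff_monomial]
  have hs (m : ℕ) : (divX^[T] p).coeff m = p.coeff (m + T) := by
    clear hq
    induction T generalizing m with
    | zero => rfl
    | succ T ih => rw [Function.iterate_succ_apply', coeff_divX, ih, add_assoc, add_comm 1]
  refine ⟨_, _, ?_, hq, hs, ?_⟩
  · ext m
    rw [coeff_add, hq, coeff_X_pow_mul', hs]
    split_ifs with h1 h2 h2
    · omega
    · simp
    · simp [Nat.sub_add_cancel h2]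
    · omega
  · rw [← Finset.card_image_of_injective (divX^[T] p).support (add_left_injective T),
      ← Finset.card_union_of_disjoint]
    · congr 1
      ext m
      simp only [Finset.mem_union, mem_support_iff, hq, Finset.mem_image, hs]
      constructor
      · rintro (h | ⟨i, hi, rfl⟩)
        · aesop
        · exact hi
      · intro h
        by_cases hm : m < T
        · simp [hm, h]
        · exact .inr ⟨m - T, by rwa [Nat.sub_add_cancel (not_lt.1 hm)],
            Nat.sub_add_cancel (not_lt.1 hm)⟩
    · rw [Finset.disjoint_left]
      intro m hm h
      obtain ⟨i, -, rfl⟩ := Finset.mem_image.1 h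
      rw [mem_support_iff, hq, if_neg (by simp)] at hm
      exact hm rfl

section Weight

variable {K : Type*} [Field K] {n : ℕ}

theorem card_biUnion_support_le_polyWeight (c : Fin n → K[X]) :
    (Finset.univ.biUnion fun j => (c j).support).card ≤ polyWeight c :=
  Finset.card_biUnion_le

theorem polyWeight_mul_le (p : K[X]) (c : Fin n → K[X]) :
    polyWeight (p • c) ≤ p.support.card * polyWeight c := by
  rw [polyWeight, polyWeight, Finset.mul_sum]
  exact Finset.sum_le_sum fun j _ => card_support_mul_le

theorem polyWeight_X_smul (c : Fin n → K[X]) :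
    polyWeight ((X : K[X]) • c) = polyWeight c := by
  refine Finset.sum_congr rfl fun j _ => ?_
  rw [← Finset.card_image_of_injective (c j).support (add_left_injective 1)]
  congr 1
  ext m
  cases m <;> simp

theorem exists_polyWeight_split (c : Fin n → K[X]) (T : ℕ) :
    ∃ u v : Fin n → K[X], c = u + (X ^ T : K[X]) • v ∧
      (∀ j m, (u j).coeff m = if m < T then (c j).coeff m else 0) ∧
      (∀ j m, (v j).coeff m = (c j).coeff (m + T)) ∧
      polyWeight u + polyWeight v = polyWeight c := by
  choose u v h1 h2 h3 h4 using fun j => (c j).exists_split_at T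
  refine ⟨u, v, funext fun j => h1 j, h2, h3, ?_⟩
  rw [polyWeight, polyWeight, ← Finset.sum_add_distrib]
  exact Finset.sum_congr rfl fun j _ => h4 j

open Matrix in
theorem vecMul_eq_zero_of_gap {D t : ℕ} {P : Matrix (Fin n) (Fin n) K[X]}
    (hP : ∀ i j, (P i j).natDegree ≤ D) {u v : Fin n → K[X]}
    (hu : ∀ j m, t ≤ m → (u j).coeff m = 0)
    (h : (u + (X ^ (t + D + 1) : K[X]) • v) ᵥ* P = 0) : u ᵥ* P = 0 ∧ v ᵥ* P = 0 := by
  rw [add_vecMul, smul_vecMul] at h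
  have hu0 : u ᵥ* P = 0 := by
    funext j
    ext m
    have hj : (u ᵥ* P) j + X ^ (t + D + 1) * (v ᵥ* P) j = 0 := congrFun h j
    by_cases hm : m < t + D + 1
    · have := congrArg (coeff · m) hj
      simpa [coeff_X_pow_mul', hm.not_ge] using this
    · simp only [vecMul, dotProduct, finsetSum_coeff, Pi.zero_apply, coeff_zero]
      refine Finset.sum_eq_zero fun i _ => ?_
      rw [coeff_mul]
      refine Finset.sum_eq_zero fun ⟨a, b⟩ hab => ?_
      have hab' : a + b = m := by simpa using hab
      by_cases ha : t ≤ a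
      · simp [hu i a ha]
      · simp [coeff_eq_zero_of_natDegree_lt ((hP i j).trans_lt (show D < b by omega))]
  refine ⟨hu0, ?_⟩
  rw [hu0, zero_add] at h
  exact (smul_eq_zero.1 h).resolve_left (pow_ne_zero _ X_ne_zero)

/-- A vector of low weight annihilated by `P` and of large degree splits at a gap. -/
theorem exists_split_of_large_degree {N D m : ℕ} {P : Matrix (Fin n) (Fin n) K[X]}
    (hP : ∀ i j, (P i j).natDegree ≤ D) {c : Fin n → K[X]} (hcP : Matrix.vecMul c P = 0)
    (hw : polyWeight c ≤ N) {j₀ : Fin n} (hm : (c j₀).coeff m ≠ 0)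
    (hmB : (N + 1) * (D + 1) ≤ m) :
    ∃ (T : ℕ) (u v : Fin n → K[X]), D < T ∧ T ≤ m ∧ c = u + (X ^ T : K[X]) • v ∧
      Matrix.vecMul u P = 0 ∧ Matrix.vecMul v P = 0 ∧ v ≠ 0 ∧
      polyWeight u + polyWeight v = polyWeight c ∧
      (∀ j, (u j).natDegree < T) ∧ (∀ j, (v j).natDegree + T ≤ (c j).natDegree ∨ v j = 0) := by
  obtain ⟨t, htm, ht⟩ := Finset.exists_gap (Finset.univ.biUnion fun j => (c j).support)
    ((card_biUnion_support_le_polyWeight c).trans hw) hmB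
  obtain ⟨u, v, hc, hu, hv, hwt⟩ := exists_polyWeight_split c (t + D + 1)
  have hut (j : Fin n) (i : ℕ) (hi : t ≤ i) : (u j).coeff i = 0 := by
    rw [hu]
    split_ifs with hlt
    · by_contra hne
      have := ht i (Finset.mem_biUnion.2 ⟨j, Finset.mem_univ _, mem_support_iff.2 hne⟩)
      omega
    · rfl
  obtain ⟨huP, hvP⟩ := vecMul_eq_zero_of_gap hP hut (hc ▸ hcP)
  refine ⟨t + D + 1, u, v, by omega, htm, hc, huP, hvP, fun h0 => hm ?_, hwt, fun j => ?_,
    fun j => ?_⟩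
  · have := hv j₀ (m - (t + D + 1))
    rw [Nat.sub_add_cancel htm, h0] at this
    simpa using this.symm
  · exact Nat.lt_succ_of_le ((natDegree_le_iff_coeff_eq_zero).2 fun i hi => hut j i (by omega))
  · by_cases h0 : v j = 0
    · exact .inr h0
    · refine .inl (le_natDegree_of_ne_zero ?_)
      rw [← hv]
      exact leadingCoeff_ne_zero.2 h0

theorem exists_bounded_degree_of_vecMul_eq_zero {N N' D : ℕ} (hN : N' ≤ N)
    {P : Matrix (Fin n) (Fin n) K[X]}
    (hP : ∀ i j, (P i j).natDegree ≤ D) {c : Fin n → K[X]} (hc : c ≠ 0)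
    (hcP : Matrix.vecMul c P = 0) (hw : polyWeight c ≤ N') :
    ∃ v : Fin n → K[X], v ≠ 0 ∧ Matrix.vecMul v P = 0 ∧ polyWeight v ≤ N' ∧
      ∀ j, (v j).natDegree ≤ (N + 1) * (D + 1) := by
  obtain ⟨d, hd⟩ : ∃ d, ∀ j, (c j).natDegree ≤ d :=
    ⟨_, fun j => Finset.le_sup (f := fun j => (c j).natDegree) (Finset.mem_univ j)⟩
  induction d using Nat.strong_induction_on generalizing c with
  | _ d ih =>
    by_cases hB : ∀ j, (c j).natDegree ≤ (N + 1) * (D + 1)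
    · exact ⟨c, hc, hcP, hw, hB⟩
    · push Not at hB
      obtain ⟨j₀, hj₀⟩ := hB
      have hc0 : c j₀ ≠ 0 := fun h => by simp [h] at hj₀
      obtain ⟨T, u, v, hDT, hTm, hsplit, huP, hvP, hv0, hwt, hud, hvd⟩ :=
        exists_split_of_large_degree hP hcP (hw.trans hN) (leadingCoeff_ne_zero.2 hc0) hj₀.le
      have hTd := hTm.trans (hd j₀)
      by_cases hu0 : u = 0
      · refine ih (d - T) (by omega) hv0 hvP (by omega) fun j => ?_
        have := hd j
        rcases hvd j with h | h
        · omega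
        · simp [h]
      · exact ih (T - 1) (by omega) hu0 huP (by omega) fun j => Nat.le_sub_one_of_lt (hud j)

open Matrix in
/-- Either a row combination of low weight can be chosen with degree bounded only in terms of the
degrees of the auxiliary data, or the saturation contains a word of at most half that weight. -/
theorem exists_bounded_degree_or_half_weight {k N D : ℕ} {G : Matrix (Fin k) (Fin n) K[X]}
    {Q : Matrix (Fin n) (Fin k) K[X]} {P : Matrix (Fin n) (Fin n) K[X]} {δ : K[X]}
    (hδ : δ ≠ 0) (hδD : δ.natDegree ≤ D) (hGQ : G * Q = δ • (1 : Matrix (Fin k) (Fin k) K[X]))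
    (hGP : G * P = 0) (hP : ∀ i j, (P i j).natDegree ≤ D)
    {a : Fin k → K[X]} (ha : a ≠ 0) (hw : polyWeight (a ᵥ* G) ≤ N) :
    (∃ b : Fin k → K[X], b ≠ 0 ∧ polyWeight (b ᵥ* G) ≤ N ∧
      ∀ j, ((b ᵥ* G) j).natDegree ≤ (N + 1) * (D + 1)) ∨
    ∃ v : Fin n → K[X], v ≠ 0 ∧ v ᵥ* P = 0 ∧ polyWeight v ≤ N / 2 := by
  obtain ⟨d, hd⟩ : ∃ d, ∀ j, ((a ᵥ* G) j).natDegree ≤ d :=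
    ⟨_, fun j => Finset.le_sup (f := fun j => ((a ᵥ* G) j).natDegree) (Finset.mem_univ j)⟩
  induction d using Nat.strong_induction_on generalizing a with
  | _ d ih =>
    by_cases hB : ∀ j, ((a ᵥ* G) j).natDegree ≤ (N + 1) * (D + 1)
    · exact .inl ⟨a, ha, hw, hB⟩
    · push Not at hB
      obtain ⟨j₀, hj₀⟩ := hB
      have hc0 : (a ᵥ* G) j₀ ≠ 0 := fun h => by simp [h] at hj₀
      obtain ⟨T, u, v, hDT, hTm, hsplit, huP, hvP, hv0, hwt, -, -⟩ :=
        exists_split_of_large_degree hP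
          (show (a ᵥ* G) ᵥ* P = 0 by rw [vecMul_vecMul, hGP, vecMul_zero]) hw
          (leadingCoeff_ne_zero.2 hc0) hj₀.le
      by_cases hu0 : u = 0
      · have hdvd (i : Fin k) : (X : K[X]) ∣ a i := by
          by_contra hX
          have hmul : δ * a i = X ^ T * (v ᵥ* Q) i := by
            have := congrFun (congrArg (· ᵥ* Q) hsplit) i
            simpa [vecMul_vecMul, hGQ, hu0, smul_vecMul, vecMul_smul] using this
          have := prime_X.pow_dvd_of_dvd_mul_right T hX ⟨_, hmul⟩
          have := natDegree_le_of_dvd this hδ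
          rw [natDegree_X_pow] at this
          omega
        choose b hb using hdvd
        have hab : a = (X : K[X]) • b := funext hb
        have hG : a ᵥ* G = (X : K[X]) • (b ᵥ* G) := by rw [hab, smul_vecMul]
        have hTd := hTm.trans (hd j₀)
        refine ih (d - 1) (by omega) (a := b) (fun h => ha (by rw [hab, h, smul_zero]))
          (by rwa [hG, polyWeight_X_smul] at hw) fun j => ?_
        have := hd j
        rw [hG, Pi.smul_apply, smul_eq_mul] at this
        by_cases h0 : (b ᵥ* G) j = 0
        · simp [h0]
        · rw [natDegree_X_mul h0] at this
          omega
      · right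
        by_cases hle : polyWeight u ≤ N / 2
        · exact ⟨u, hu0, huP, hle⟩
        · exact ⟨v, hv0, hvP, by omega⟩

end Weight

section Syndrome

open Matrix

variable {R : Type*} [CommRing R] {k n : ℕ}

/-- The matrix with `G * interpolant G φ = det G_φ • 1`, where `G_φ` consists of the columns of `G`
selected by `φ`. -/
def interpolant (G : Matrix (Fin k) (Fin n) R) (φ : Fin k → Fin n) : Matrix (Fin n) (Fin k) R :=
  (1 : Matrix (Fin n) (Fin n) R).submatrix id φ * (G.submatrix id φ).adjugate

/-- A matrix annihilating the rows of `G`; when `det G_φ ≠ 0` over a domain, its left kernel is the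
saturation of the row module of `G`. -/
def syndrome (G : Matrix (Fin k) (Fin n) R) (φ : Fin k → Fin n) : Matrix (Fin n) (Fin n) R :=
  (G.submatrix id φ).det • (1 : Matrix (Fin n) (Fin n) R) - interpolant G φ * G

theorem mul_interpolant (G : Matrix (Fin k) (Fin n) R) (φ : Fin k → Fin n) :
    G * interpolant G φ = (G.submatrix id φ).det • (1 : Matrix (Fin k) (Fin k) R) := by
  have h : G * (1 : Matrix (Fin n) (Fin n) R).submatrix id φ = G.submatrix id φ := by
    ext i j
    simp [mul_apply, one_apply]
  rw [interpolant, ← Matrix.mul_assoc, h, mul_adjugate]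

theorem mul_syndrome (G : Matrix (Fin k) (Fin n) R) (φ : Fin k → Fin n) :
    G * syndrome G φ = 0 := by
  rw [syndrome, Matrix.mul_sub, ← Matrix.mul_assoc, mul_interpolant]
  simp

theorem map_interpolant {S : Type*} [CommRing S] (f : R →+* S) (G : Matrix (Fin k) (Fin n) R)
    (φ : Fin k → Fin n) : (interpolant G φ).map f = interpolant (G.map f) φ := by
  rw [interpolant, interpolant, Matrix.map_mul, ← RingHom.mapMatrix_apply f (adjugate _),
    RingHom.map_adjugate, RingHom.mapMatrix_apply, ← submatrix_map, ← submatrix_map,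
    Matrix.map_one _ f.map_zero f.map_one]

theorem map_syndrome {S : Type*} [CommRing S] (f : R →+* S) (G : Matrix (Fin k) (Fin n) R)
    (φ : Fin k → Fin n) : (syndrome G φ).map f = syndrome (G.map f) φ := by
  have hdet : f (G.submatrix id φ).det = ((G.map f).submatrix id φ).det := by
    rw [RingHom.map_det, RingHom.mapMatrix_apply, submatrix_map]
  rw [syndrome, syndrome, ← map_interpolant, ← Matrix.map_mul, ← hdet]
  ext i j
  simp only [Matrix.map_apply, Matrix.sub_apply, Matrix.smul_apply, one_apply, map_sub,
    smul_eq_mul, map_mul, apply_ite f, map_one, map_zero]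

theorem det_smul_eq_of_vecMul_syndrome {G : Matrix (Fin k) (Fin n) R} {φ : Fin k → Fin n}
    {v : Fin n → R} (hv : v ᵥ* syndrome G φ = 0) :
    (G.submatrix id φ).det • v = (v ᵥ* interpolant G φ) ᵥ* G := by
  rw [syndrome, vecMul_sub, sub_eq_zero, vecMul_smul, vecMul_one] at hv
  rw [hv, vecMul_vecMul]

theorem vecMul_syndrome_of_det_ne_zero [IsDomain R] {G : Matrix (Fin k) (Fin n) R}
    {φ : Fin k → Fin n} (hφ : (G.submatrix id φ).det ≠ 0) {v : Fin n → R}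
    (hv : v ᵥ* syndrome G φ = 0) (ψ : Fin k → Fin n) : v ᵥ* syndrome G ψ = 0 := by
  have : (G.submatrix id φ).det • (v ᵥ* syndrome G ψ) = 0 := by
    rw [← smul_vecMul, det_smul_eq_of_vecMul_syndrome hv, vecMul_vecMul, mul_syndrome, vecMul_zero]
  exact (smul_eq_zero.1 this).resolve_left hφ

end Syndrome

section Supported

open Matrix

/-- The vector of polynomials with coefficients `x` at the positions in `S`. -/
noncomputable def ofCoeffs {K ι : Type*} [Field K] [DecidableEq ι] (S : Finset (Σ _ : ι, ℕ))
    (x : S → K) : ι → K[X] :=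
  ∑ q : S, Pi.single q.1.1 (monomial q.1.2 (x q))

variable {K ι : Type*} [Field K] [DecidableEq ι] {S : Finset (Σ _ : ι, ℕ)}

theorem coeff_ofCoeffs (x : S → K) (i : ι) (m : ℕ) :
    (ofCoeffs S x i).coeff m = if h : ⟨i, m⟩ ∈ S then x ⟨⟨i, m⟩, h⟩ else 0 := by
  have hterm (q : S) : ((Pi.single q.1.1 (monomial q.1.2 (x q)) : ι → K[X]) i).coeff m =
      if q.1 = ⟨i, m⟩ then x q else 0 := by
    obtain ⟨⟨i', m'⟩, hq⟩ := q
    by_cases hi : i' = i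
    · subst hi
      simp [coeff_monomial]
    · simp [hi]
  rw [ofCoeffs, Finset.sum_apply, finsetSum_coeff]
  simp only [hterm]
  split_ifs with h
  · rw [Finset.sum_eq_single ⟨_, h⟩]
    · simp
    · intro b _ hb
      rw [if_neg fun h' => hb (Subtype.ext h')]
    · simp
  · exact Finset.sum_eq_zero fun q _ => if_neg fun h' : q.1 = ⟨i, m⟩ => h (h' ▸ q.2)

theorem coeff_ofCoeffs_vecMul [Fintype ι] {J : Type*} (M : Matrix ι J K[X]) (x : S → K) (j : J)
    (m : ℕ) : ((ofCoeffs S x ᵥ* M) j).coeff m =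
      ∑ q : S, (X ^ q.1.2 * M q.1.1 j).coeff m * x q := by
  rw [ofCoeffs, sum_vecMul, Finset.sum_apply, finsetSum_coeff]
  refine Finset.sum_congr rfl fun q _ => ?_
  rw [single_vecMul, Pi.smul_apply, row_apply, smul_eq_mul, ← C_mul_X_pow_eq_monomial, mul_assoc,
    coeff_C_mul, mul_comm]

theorem exists_supported_iff [Fintype ι] {J : Type*} (M : Matrix ι J K[X])
    (S : Finset (Σ _ : ι, ℕ)) (I : Set (Σ _ : J, ℕ)) :
    (∃ v : ι → K[X], v ≠ 0 ∧ (∀ i m, (v i).coeff m ≠ 0 → ⟨i, m⟩ ∈ S) ∧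
      ∀ p ∈ I, ((v ᵥ* M) p.1).coeff p.2 = 0) ↔
    ∃ x : S → K, x ≠ 0 ∧ ∀ p : I, ∑ q : S, (X ^ q.1.2 * M q.1.1 p.1.1).coeff p.1.2 * x q = 0 := by
  constructor
  · rintro ⟨v, hv, hS, hI⟩
    have hx : v = ofCoeffs S fun q => (v q.1.1).coeff q.1.2 := by
      funext i
      ext m
      rw [coeff_ofCoeffs]
      split_ifs with h
      · rfl
      · exact not_not.1 (mt (hS i m) h)
    refine ⟨fun q => (v q.1.1).coeff q.1.2, fun h0 => hv ?_, fun p => ?_⟩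
    · rw [hx, h0]
      funext i
      ext m
      simp [coeff_ofCoeffs]
    · rw [← coeff_ofCoeffs_vecMul, ← hx]
      exact hI p p.2
  · rintro ⟨x, hx, h⟩
    refine ⟨ofCoeffs S x, fun h0 => hx (funext fun q => ?_), fun i m hne => ?_, fun p hp => ?_⟩
    · have := coeff_ofCoeffs x q.1.1 q.1.2
      rw [h0, dif_pos q.2] at this
      simpa using this.symm
    · by_contra hS
      exact hne (by rw [coeff_ofCoeffs, dif_neg hS])
    · rw [coeff_ofCoeffs_vecMul]
      exact h ⟨p, hp⟩

theorem isZariskiClosed_exists_supported {F σ : Type*} [Field F] [Algebra F K] [Fintype ι]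
    {J : Type*} (M : Matrix ι J (MvPolynomial σ F)[X]) (S : Finset (Σ _ : ι, ℕ))
    (I : Set (Σ _ : J, ℕ)) :
    IsZariskiClosed fun α : σ → K => ∃ v : ι → K[X], v ≠ 0 ∧
      (∀ i m, (v i).coeff m ≠ 0 → ⟨i, m⟩ ∈ S) ∧
      ∀ p ∈ I, ((v ᵥ* M.map (mapRingHom (MvPolynomial.aeval α).toRingHom)) p.1).coeff p.2 = 0 := by
  simp only [exists_supported_iff]
  have hcoeff (α : σ → K) (p : I) (q : S) :
      (X ^ q.1.2 * M.map (mapRingHom (MvPolynomial.aeval α : MvPolynomial σ F →ₐ[F] K).toRingHom)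
        q.1.1 p.1.1).coeff p.1.2 =
      MvPolynomial.aeval α ((X ^ q.1.2 * M q.1.1 p.1.1).coeff p.1.2) := by
    change _ = (MvPolynomial.aeval α : MvPolynomial σ F →ₐ[F] K).toRingHom _
    rw [← coeff_map]
    simp
  simp only [hcoeff]
  exact IsZariskiClosed.exists_ne_zero _

/-- The sets of at most `N` coefficient positions of degree at most `B` in a vector of length
`n`. -/
def positionSets (n B N : ℕ) : Finset (Finset (Σ _ : Fin n, ℕ)) :=
  (Finset.univ.sigma fun _ => Finset.range (B + 1)).powerset.filter fun S => S.card ≤ N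

theorem polyWeight_le_of_mem_positionSets {n B N : ℕ} {S : Finset (Σ _ : Fin n, ℕ)}
    (hS : S ∈ positionSets n B N) {c : Fin n → K[X]}
    (hc : ∀ j m, (c j).coeff m ≠ 0 → ⟨j, m⟩ ∈ S) : polyWeight c ≤ N := by
  rw [polyWeight, ← Finset.card_sigma]
  refine (Finset.card_le_card fun q hq => ?_).trans (Finset.mem_filter.1 hS).2
  exact hc q.1 q.2 (mem_support_iff.1 (Finset.mem_sigma.1 hq).2)

theorem exists_mem_positionSets {n B N : ℕ} {c : Fin n → K[X]} (hw : polyWeight c ≤ N)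
    (hd : ∀ j, (c j).natDegree ≤ B) :
    ∃ S ∈ positionSets n B N, ∀ j m, (c j).coeff m ≠ 0 → ⟨j, m⟩ ∈ S := by
  refine ⟨Finset.univ.sigma fun j => (c j).support, ?_, fun j m h => by simpa using h⟩
  refine Finset.mem_filter.2 ⟨Finset.mem_powerset.2 (Finset.sigma_mono subset_rfl fun j => ?_), ?_⟩
  · exact fun m hm => Finset.mem_range.2
      (Nat.lt_succ_of_le ((le_natDegree_of_mem_supp m hm).trans (hd j)))
  · rwa [Finset.card_sigma]

end Supported

open Matrix in
/-- A nonzero row combination of weight at most `N` exists if and only if there is one among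
finitely many shapes of supports for the combination, or one of weight at most `N / 2` among
finitely many shapes of supports in the saturation. -/
theorem exists_polyWeight_le_iff {F K : Type*} [Field F] [Finite F] [Field K] [Algebra F K]
    [Algebra.IsAlgebraic F K] {k n D : ℕ} (N : ℕ) (G : Matrix (Fin k) (Fin n) K[X])
    (hG : ∀ a : Fin k → K[X], a ᵥ* G = 0 → a = 0)
    (hdet : ∀ φ : Fin k → Fin n, (G.submatrix id φ).det.natDegree ≤ D)
    (hint : ∀ φ i j, (interpolant G φ i j).natDegree ≤ D)
    (hsyn : ∀ φ i j, (syndrome G φ i j).natDegree ≤ D) :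
    (∃ a : Fin k → K[X], a ≠ 0 ∧ polyWeight (a ᵥ* G) ≤ N) ↔
      (∃ S ∈ positionSets n ((N + 1) * (D + 1)) N, ∃ a : Fin k → K[X], a ≠ 0 ∧
        (∀ i m, (a i).coeff m ≠ 0 → ⟨i, m⟩ ∈ Finset.univ.sigma fun _ : Fin k =>
          Finset.range ((N + 1) * (D + 1) + D + 1)) ∧
        ∀ p ∈ {p : Σ _ : Fin n, ℕ | p ∉ S}, ((a ᵥ* G) p.1).coeff p.2 = 0) ∨
      ∃ S ∈ positionSets n ((N + 1) * (D + 1)) (N / 2), ∃ v : Fin n → K[X], v ≠ 0 ∧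
        (∀ i m, (v i).coeff m ≠ 0 → ⟨i, m⟩ ∈ S) ∧
        ∀ p ∈ (Set.univ : Set (Σ _ : (Fin k → Fin n) × Fin n, ℕ)),
          ((v ᵥ* Matrix.of fun i (q : (Fin k → Fin n) × Fin n) => syndrome G q.1 i q.2)
            p.1).coeff p.2 = 0 := by
  obtain ⟨φ, hφ⟩ := exists_submatrix_det_ne_zero_of_linearIndependent G hG
  constructor
  · rintro ⟨a, ha, hw⟩
    rcases exists_bounded_degree_or_half_weight hφ (hdet φ) (mul_interpolant G φ)
      (mul_syndrome G φ) (hsyn φ) ha hw with ⟨b, hb, hbw, hbd⟩ | ⟨v, hv, hvP, hvw⟩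
    · left
      obtain ⟨S, hS, hbS⟩ := exists_mem_positionSets hbw hbd
      refine ⟨S, hS, b, hb, fun i m hm => ?_, fun p hp => not_not.1 (mt (hbS p.1 p.2) hp)⟩
      have hmul : (G.submatrix id φ).det * b i = ((b ᵥ* G) ᵥ* interpolant G φ) i := by
        rw [vecMul_vecMul, mul_interpolant, vecMul_smul, vecMul_one]
        rfl
      have hdeg : (((b ᵥ* G) ᵥ* interpolant G φ) i).natDegree ≤ (N + 1) * (D + 1) + D :=
        natDegree_sum_le_of_forall_le Finset.univ _ fun j _ =>
          natDegree_mul_le.trans (add_le_add (hbd j) (hint φ j i))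
      have hbi : b i ≠ 0 := fun h => by simp [h] at hm
      rw [← hmul, natDegree_mul hφ hbi] at hdeg
      have := le_natDegree_of_ne_zero hm
      simp only [Finset.mem_sigma, Finset.mem_univ, Finset.mem_range, true_and]
      omega
    · right
      obtain ⟨u, hu, huP, huw, hud⟩ := exists_bounded_degree_of_vecMul_eq_zero
        (Nat.div_le_self N 2) (hsyn φ) hv hvP hvw
      obtain ⟨S, hS, huS⟩ := exists_mem_positionSets huw hud
      refine ⟨S, hS, u, hu, huS, fun p _ => ?_⟩
      have : (u ᵥ* syndrome G p.1.1) p.1.2 = 0 := by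
        rw [vecMul_syndrome_of_det_ne_zero hφ huP, Pi.zero_apply]
      exact (congrArg (coeff · p.2) this).trans (coeff_zero _)
  · rintro (⟨S, hS, a, ha, -, h⟩ | ⟨S, hS, v, hv, hvS, h⟩)
    · refine ⟨a, ha, polyWeight_le_of_mem_positionSets hS fun j m hne => ?_⟩
      by_contra hjm
      exact hne (h ⟨j, m⟩ hjm)
    · have hvP : v ᵥ* syndrome G φ = 0 := by
        funext j
        ext m
        exact h ⟨(φ, j), m⟩ trivial
      obtain ⟨i, j, hij, g, hg⟩ := exists_dvd_X_pow_sub_X_pow (F := F) _ hφ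
      have hne : (X ^ j - X ^ i : K[X]) ≠ 0 := fun h0 => hij.ne'
        (by simpa using congrArg natDegree (sub_eq_zero.1 h0))
      have hmul : (g • (v ᵥ* interpolant G φ)) ᵥ* G = (X ^ j - X ^ i : K[X]) • v := by
        rw [smul_vecMul, ← det_smul_eq_of_vecMul_syndrome hvP, smul_smul, hg, mul_comm]
      refine ⟨g • (v ᵥ* interpolant G φ), fun h0 => ?_, ?_⟩
      · rw [h0, zero_vecMul] at hmul
        exact (smul_ne_zero hne hv) hmul.symm
      · rw [hmul]
        have hcard : (X ^ j - X ^ i : K[X]).support.card ≤ 2 := by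
          rw [sub_eq_add_neg]
          refine (Finset.card_le_card support_add).trans ((Finset.card_union_le _ _).trans ?_)
          rw [support_neg]
          exact add_le_add (card_support_le_one_iff_monomial.2 ⟨j, 1, X_pow_eq_monomial j⟩)
            (card_support_le_one_iff_monomial.2 ⟨i, 1, X_pow_eq_monomial i⟩)
        have hv2 := polyWeight_le_of_mem_positionSets hS hvS
        calc _ ≤ _ := polyWeight_mul_le _ _
          _ ≤ 2 * (N / 2) := Nat.mul_le_mul hcard hv2
          _ ≤ N := Nat.mul_div_le N 2

open Matrix in
theorem freeDist_span_rows_le_iff {K : Type*} [Field K] {k n : ℕ} (hk : 0 < k)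
    (G : Matrix (Fin k) (Fin n) K[X]) (hG : ∀ a : Fin k → K[X], a ᵥ* G = 0 → a = 0) (N : ℕ) :
    freeDist (Submodule.span K[X] (Set.range G)) ≤ N ↔
      ∃ a : Fin k → K[X], a ≠ 0 ∧ polyWeight (a ᵥ* G) ≤ N := by
  have hmem (a : Fin k → K[X]) : a ᵥ* G ∈ Submodule.span K[X] (Set.range G) :=
    (Submodule.mem_span_range_iff_exists_fun _).2 ⟨a, (vecMul_eq_sum a G).symm⟩
  constructor
  · intro h
    have hne : {d | ∃ c ∈ Submodule.span K[X] (Set.range G), c ≠ 0 ∧ polyWeight c = d}.Nonempty :=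
      ⟨_, _, hmem 1, fun h0 => one_ne_zero (congrFun (hG 1 h0) ⟨0, hk⟩), rfl⟩
    obtain ⟨c, hc, hc0, hw⟩ := Nat.sInf_mem hne
    obtain ⟨a, rfl⟩ := (Submodule.mem_span_range_iff_exists_fun _).1 hc
    rw [← vecMul_eq_sum] at hc0 hw
    exact ⟨a, fun h0 => hc0 (by rw [h0, zero_vecMul]), hw.trans_le h⟩
  · rintro ⟨a, ha, hw⟩
    exact le_trans (Nat.sInf_le (m := polyWeight (a ᵥ* G))
      ⟨_, hmem a, fun h0 => ha (hG a h0), rfl⟩) hw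

/-- For a family of convolutional codes parameterized by a Zariski open
subset `U` of affine space over the algebraic closure `K` of a finite field `𝔽`, the free
distance is a lower semicontinuous function of the parameter: for every integer `N`,
the locus `{α ∈ U : d_free(C_α) ≤ N}` is Zariski closed in `U`, i.e. it is cut out in `U`
by the common vanishing of finitely many polynomials. -/
theorem freeDist_lowerSemicontinuous {F : Type*} [Field F] [Fintype F]
    {K : Type*} [Field K] [Algebra F K] [IsAlgClosure F K] {k n r : ℕ}
    (𝒢 : Fin k → Fin n → Polynomial (MvPolynomial (Fin (r + 1)) F))
    (U : Set (Fin (r + 1) → K))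
    (hU : ∃ s : Finset (MvPolynomial (Fin (r + 1)) K),
      Uᶜ = {α | ∀ p ∈ s, MvPolynomial.eval α p = 0})
    (hind : ∀ α ∈ U, LinearIndependent (Polynomial K)
      (fun i => fun j => (𝒢 i j).map
        (MvPolynomial.aeval α : MvPolynomial (Fin (r + 1)) F →ₐ[F] K).toRingHom))
    (N : ℤ) :
    ∃ s : Finset (MvPolynomial (Fin (r + 1)) K), ∀ α ∈ U,
      ((freeDist (Submodule.span (Polynomial K) (Set.range fun i => fun j =>
          (𝒢 i j).map
            (MvPolynomial.aeval α : MvPolynomial (Fin (r + 1)) F →ₐ[F] K).toRingHom)) : ℤ)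
        ≤ N ↔ ∀ p ∈ s, MvPolynomial.eval α p = 0) := by
  suffices h : ∃ P : (Fin (r + 1) → K) → Prop, IsZariskiClosed P ∧ ∀ α ∈ U,
      ((freeDist (Submodule.span (Polynomial K) (Set.range fun i => fun j =>
          (𝒢 i j).map
            (MvPolynomial.aeval α : MvPolynomial (Fin (r + 1)) F →ₐ[F] K).toRingHom)) : ℤ)
        ≤ N ↔ P α) by
    obtain ⟨P, hP, hiff⟩ := h
    obtain ⟨s, hs⟩ := hP.exists_finset
    exact ⟨s, fun α hα => (hiff α hα).trans (hs α)⟩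
  rcases lt_or_ge N 0 with hN | hN
  · exact ⟨_, .const False, fun α _ => iff_of_false (by omega) id⟩
  lift N to ℕ using hN
  simp only [Nat.cast_le]
  rcases Nat.eq_zero_or_pos k with rfl | hk
  · refine ⟨_, .const True, fun α _ => iff_of_true ?_ trivial⟩
    simp +contextual [freeDist, Set.range_eq_empty]
  have : Algebra.IsAlgebraic F K := IsAlgClosure.isAlgebraic
  let M : Matrix (Fin k) (Fin n) (MvPolynomial (Fin (r + 1)) F)[X] := Matrix.of 𝒢
  obtain ⟨D, hdet, hint, hsyn⟩ : ∃ D, (∀ φ : Fin k → Fin n, (M.submatrix id φ).det.natDegree ≤ D) ∧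
      (∀ φ i j, (interpolant M φ i j).natDegree ≤ D) ∧
      ∀ φ i j, (syndrome M φ i j).natDegree ≤ D := by
    obtain ⟨a, ha⟩ := (Set.finite_range
      fun φ : Fin k → Fin n => (M.submatrix id φ).det.natDegree).bddAbove
    obtain ⟨b, hb⟩ := (Set.finite_range fun q : (Fin k → Fin n) × Fin n × Fin k =>
      (interpolant M q.1 q.2.1 q.2.2).natDegree).bddAbove
    obtain ⟨c, hc⟩ := (Set.finite_range fun q : (Fin k → Fin n) × Fin n × Fin n =>
      (syndrome M q.1 q.2.1 q.2.2).natDegree).bddAbove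
    refine ⟨a + b + c, fun φ => ?_, fun φ i j => ?_, fun φ i j => ?_⟩
    · have := ha ⟨φ, rfl⟩
      dsimp only at this
      omega
    · have := hb ⟨(φ, i, j), rfl⟩
      dsimp only at this
      omega
    · have := hc ⟨(φ, i, j), rfl⟩
      dsimp only at this
      omega
  refine ⟨_, (IsZariskiClosed.exists_mem (positionSets n ((N + 1) * (D + 1)) N) fun S _ =>
    isZariskiClosed_exists_supported M
      (Finset.univ.sigma fun _ => Finset.range ((N + 1) * (D + 1) + D + 1)) {p | p ∉ S}).or
    (IsZariskiClosed.exists_mem (positionSets n ((N + 1) * (D + 1)) (N / 2)) fun S _ =>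
    isZariskiClosed_exists_supported
      (Matrix.of fun i (q : (Fin k → Fin n) × Fin n) => syndrome M q.1 i q.2) S Set.univ),
    fun α hα => ?_⟩
  let f := mapRingHom (MvPolynomial.aeval α : MvPolynomial (Fin (r + 1)) F →ₐ[F] K).toRingHom
  have hinj (a : Fin k → K[X]) (ha : Matrix.vecMul a (M.map f) = 0) : a = 0 := by
    rw [Matrix.vecMul_eq_sum] at ha
    exact funext (Fintype.linearIndependent_iff.1 (hind α hα) a ha)
  have hsynmap (φ : Fin k → Fin n) (i j : Fin n) :
      f (syndrome M φ i j) = syndrome (M.map f) φ i j := by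
    rw [← map_syndrome, Matrix.map_apply]
  refine (freeDist_span_rows_le_iff hk (M.map f) hinj N).trans
    ((exists_polyWeight_le_iff (F := F) (D := D) N (M.map f) hinj (fun φ => ?_) (fun φ i j => ?_)
      fun φ i j => ?_).trans ?_)
  · have h : ((M.map f).submatrix id φ).det = f (M.submatrix id φ).det := by
      rw [RingHom.map_det, RingHom.mapMatrix_apply, Matrix.submatrix_map]
    rw [h]
    exact natDegree_map_le.trans (hdet φ)
  · rw [← map_interpolant, Matrix.map_apply]
    exact natDegree_map_le.trans (hint φ i j)
  · rw [← hsynmap]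
    exact natDegree_map_le.trans (hsyn φ i j)
  · simp only [← hsynmap]
    rfl
end

section
/- Let 𝔽 be a finite field, let A be a valuation ring containing 𝔽, with maximal ideal 𝔪, residue field κ = A/𝔪 and fraction field K. Let G(z) be a k×n matrix over A[z] and let Ḡ(z) be its reduction modulo 𝔪, a matrix over κ[z]. Assume the rows of Ḡ(z) are linearly independent over κ(z) (then the rows of G(z) are linearly independent over K(z)). Let C_K ⊆ K[z]ⁿ be the K[z]-submodule spanned by the rows of G(z) and C_κ ⊆ κ[z]ⁿ the κ[z]-submodule spanned by the rows of Ḡ(z). Then d_free(C_K) ≥ d_free(C_κ): the free distance can only decrease under specialization to the residue field. -/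
open Polynomial

/-- A nonzero finite family of polynomials over the fraction field of a valuation ring can be
rescaled to a family over the valuation ring whose reduction is nonzero. -/
theorem exists_primitive_rescaling {A K ι : Type*} [CommRing A] [IsDomain A] [ValuationRing A]
    [Field K] [Algebra A K] [IsFractionRing A K] [Fintype ι] (α : ι → K[X]) (hα : α ≠ 0) :
    ∃ (s : K) (β : ι → A[X]), s ≠ 0 ∧ (∀ i, (β i).map (algebraMap A K) = C s * α i) ∧
      (fun i => (β i).map (IsLocalRing.residue A)) ≠ 0 := by
  classical
  obtain ⟨i₀, hi₀⟩ := Function.ne_iff.mp hα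
  obtain ⟨m₀, hm₀⟩ := Polynomial.support_nonempty.mpr hi₀
  obtain ⟨⟨i, m⟩, him, hmax⟩ := Finset.exists_max_image
    (Finset.univ.sigma fun i => (α i).support)
    (fun x => ValuationRing.valuation A K ((α x.1).coeff x.2)) ⟨⟨i₀, m₀⟩, by simpa using hm₀⟩
  have hne : (α i).coeff m ≠ 0 := by simpa using him
  have hlift : ∀ j, C ((α i).coeff m)⁻¹ * α j ∈ Polynomial.lifts (algebraMap A K) := by
    intro j
    rw [Polynomial.lifts_iff_coeff_lifts]
    intro l
    rw [Polynomial.coeff_C_mul, Set.mem_range, ← ValuationRing.mem_integer_iff,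
      Valuation.mem_integer_iff, map_mul, map_inv₀]
    by_cases hl : (α j).coeff l = 0
    · simp [hl]
    · rw [inv_mul_le_one₀ (by rwa [zero_lt_iff, Valuation.ne_zero_iff])]
      exact hmax ⟨j, l⟩ (by simpa using hl)
  choose β hβ using fun j => (Polynomial.mem_lifts _).mp (hlift j)
  refine ⟨_, β, inv_ne_zero hne, hβ, fun h => ?_⟩
  have hone : (β i).coeff m = 1 := by
    apply IsFractionRing.injective A K
    rw [← Polynomial.coeff_map, hβ, Polynomial.coeff_C_mul, inv_mul_cancel₀ hne, map_one]
  have hzero := congrArg (fun p => Polynomial.coeff p m) (congrFun h i)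
  simp [hone] at hzero

/-- Specializing coefficients to the residue field does not increase the weight relative to the
fraction field. -/
theorem polyWeight_map_residue_le {A K : Type*} [CommRing A] [IsLocalRing A]
    [Field K] [Algebra A K] [FaithfulSMul A K] {n : ℕ} (c : Fin n → A[X]) :
    polyWeight (fun j => (c j).map (IsLocalRing.residue A)) ≤
      polyWeight (fun j => (c j).map (algebraMap A K)) := by
  refine Finset.sum_le_sum fun j _ => Finset.card_le_card ?_
  rw [Polynomial.support_map_of_injective _ (FaithfulSMul.algebraMap_injective A K)]
  exact Polynomial.support_map_subset _ _

theorem polyWeight_C_mul {K : Type*} [Field K] {n : ℕ} {s : K} (hs : s ≠ 0)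
    (c : Fin n → K[X]) : polyWeight (fun j => C s * c j) = polyWeight c := by
  refine Finset.sum_congr rfl fun j _ => congrArg Finset.card ?_
  ext m
  simp [hs]

/-- Every nonzero codeword over the fraction field specializes, after rescaling, to a nonzero
codeword over the residue field of no larger weight. -/
theorem exists_mem_span_residue_polyWeight_le {A K : Type*} [CommRing A] [IsDomain A]
    [ValuationRing A] [Field K] [Algebra A K] [IsFractionRing A K] {k n : ℕ}
    (G : Fin k → Fin n → A[X])
    (hind : LinearIndependent (IsLocalRing.ResidueField A)[X]
      (fun i => fun j => (G i j).map (IsLocalRing.residue A)))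
    {c : Fin n → K[X]} (hc : c ∈ Submodule.span K[X]
      (Set.range fun i => fun j => (G i j).map (algebraMap A K))) (hc0 : c ≠ 0) :
    ∃ c' ∈ Submodule.span (IsLocalRing.ResidueField A)[X]
      (Set.range fun i => fun j => (G i j).map (IsLocalRing.residue A)),
      c' ≠ 0 ∧ polyWeight c' ≤ polyWeight c := by
  obtain ⟨α, rfl⟩ := (Submodule.mem_span_range_iff_exists_fun _).mp hc
  have hα : α ≠ 0 := by
    rintro rfl
    simp at hc0
  obtain ⟨s, β, hs, hβ, hβ0⟩ := exists_primitive_rescaling (A := A) α hα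
  have hres : (fun j => (∑ i, β i * G i j).map (IsLocalRing.residue A)) =
      ∑ i, (β i).map (IsLocalRing.residue A) •
        (fun j => (G i j).map (IsLocalRing.residue A)) := by
    ext1 j
    simp [Polynomial.map_sum]
  refine ⟨fun j => (∑ i, β i * G i j).map (IsLocalRing.residue A), ?_, fun h => hβ0 ?_, ?_⟩
  · rw [hres]
    exact (Submodule.mem_span_range_iff_exists_fun _).mpr ⟨_, rfl⟩
  · exact funext (Fintype.linearIndependent_iff.mp hind _ (hres.symm.trans h))
  · rw [← polyWeight_C_mul hs]
    refine (polyWeight_map_residue_le (K := K) _).trans_eq (congrArg polyWeight ?_)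
    ext1 j
    simp [Polynomial.map_sum, hβ, Finset.mul_sum, mul_assoc]

/-- Let `A` be a valuation ring containing a finite field `𝔽`, with residue
field `κ` and fraction field `K`, and let `G(z)` be a `k × n` matrix over `A[z]` whose
reduction mod the maximal ideal has rows linearly independent over `κ(z)`. Then the free
distance of the code spanned by the rows of `G(z)` over `K[z]` is at least the free distance
of the code spanned by the rows of the reduced matrix over `κ[z]`: the free distance can
only decrease under specialization to the residue field. -/
theorem freeDist_specialization {F A : Type*} [Field F] [Fintype F]
    [CommRing A] [IsDomain A] [ValuationRing A] [Algebra F A] {k n : ℕ}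
    (G : Fin k → Fin n → Polynomial A)
    (hind : LinearIndependent (Polynomial (IsLocalRing.ResidueField A))
      (fun i => fun j => (G i j).map (IsLocalRing.residue A))) :
    freeDist (Submodule.span (Polynomial (IsLocalRing.ResidueField A))
        (Set.range fun i => fun j => (G i j).map (IsLocalRing.residue A))) ≤
      freeDist (Submodule.span (Polynomial (FractionRing A))
        (Set.range fun i => fun j => (G i j).map (algebraMap A (FractionRing A)))) := by
  rcases Set.eq_empty_or_nonempty {d | ∃ c ∈ Submodule.span (FractionRing A)[X]
      (Set.range fun i => fun j => (G i j).map (algebraMap A (FractionRing A))),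
      c ≠ 0 ∧ polyWeight c = d} with hempty | hne
  · have hk : IsEmpty (Fin k) := by
      refine ⟨fun i => hind.ne_zero i ?_⟩
      by_contra hi
      refine Set.eq_empty_iff_forall_notMem.mp hempty _
        ⟨_, Submodule.subset_span ⟨i, rfl⟩, fun h => hi ?_, rfl⟩
      ext1 j
      have hj : G i j = 0 := (Polynomial.map_eq_zero_iff
        (IsFractionRing.injective A (FractionRing A))).mp (congrFun h j)
      simp [hj]
    simp [freeDist, Set.range_eq_empty]
  · obtain ⟨c, hc, hc0, hw⟩ := Nat.sInf_mem hne
    obtain ⟨c', hc', hc0', hle⟩ := exists_mem_span_residue_polyWeight_le G hind hc hc0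
    refine le_trans ?_ (hle.trans_eq hw)
    exact Nat.sInf_le ⟨c', hc', hc0', rfl⟩
end

section
/- Let 𝔽 be a finite field with algebraic closure 𝔽̄, let 𝒢(z) be a k×n matrix with entries in 𝔽[λ₀,…,λ_r][z], and for α ∈ 𝔽̄^{r+1} let 𝒢_α(z) be the specialization λ_i ↦ α_i. Let U ⊆ 𝔽̄^{r+1} be a Zariski open subset such that for every α ∈ U the matrix 𝒢_α(z) is a canonical (basic and reduced) generator matrix of degree δ, and let C_α be the convolutional code over 𝔽̄ it generates. Then the set of α ∈ U such that C_α is MDS, i.e. {α ∈ U : d_free(C_α) ≥ (n−k)(⌊δ/k⌋+1)+δ+1}, is Zariski open in U. -/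
open Polynomial

open Matrix

section Syndrome

variable {S : Type*} [CommRing S] {k n : ℕ}

/-- The Cramer-type syndrome matrix of `G` attached to a choice `φ` of `k` columns: a vector `c`
satisfies `c ᵥ* syndromeMatrix G φ = 0` iff `det G_φ • c = (c_φ ᵥ* adj G_φ) ᵥ* G`. -/
noncomputable def syndromeMatrix (G : Matrix (Fin k) (Fin n) S) (φ : Fin k ↪ Fin n) :
    Matrix (Fin n) (Fin n) S :=
  (G.submatrix id φ).det • (1 : Matrix (Fin n) (Fin n) S) -
    (1 : Matrix (Fin n) (Fin n) S).submatrix id φ * (G.submatrix id φ).adjugate * G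

theorem mul_one_submatrix (G : Matrix (Fin k) (Fin n) S) (φ : Fin k ↪ Fin n) :
    G * (1 : Matrix (Fin n) (Fin n) S).submatrix id φ = G.submatrix id φ := by
  ext i j
  simp [Matrix.mul_apply, Matrix.one_apply]

theorem mul_syndromeMatrix (G : Matrix (Fin k) (Fin n) S) (φ : Fin k ↪ Fin n) :
    G * syndromeMatrix G φ = 0 := by
  rw [syndromeMatrix, Matrix.mul_sub, ← Matrix.mul_assoc, ← Matrix.mul_assoc, mul_one_submatrix,
    Matrix.mul_adjugate]
  simp

theorem syndromeMatrix_map {S' : Type*} [CommRing S'] (f : S →+* S')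
    (G : Matrix (Fin k) (Fin n) S) (φ : Fin k ↪ Fin n) :
    syndromeMatrix (G.map f) φ = (syndromeMatrix G φ).map f := by
  have hsub : (G.map f).submatrix id φ = f.mapMatrix (G.submatrix id φ) := rfl
  have hone : ((1 : Matrix (Fin n) (Fin n) S').submatrix id φ) =
      ((1 : Matrix (Fin n) (Fin n) S).submatrix id φ).map f := by
    ext i j
    simp [Matrix.one_apply, apply_ite f]
  rw [syndromeMatrix, syndromeMatrix, hsub, ← RingHom.map_adjugate, ← RingHom.map_det, hone,
    RingHom.mapMatrix_apply, ← Matrix.map_mul, ← Matrix.map_mul]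
  ext i j
  rw [Matrix.sub_apply, Matrix.map_apply, Matrix.map_apply, Matrix.sub_apply, map_sub]
  simp [Matrix.one_apply, apply_ite f]

theorem mem_span_rows_iff_exists_vecMul (G : Matrix (Fin k) (Fin n) S) (c : Fin n → S) :
    c ∈ Submodule.span S (Set.range fun i => G i) ↔ ∃ u, u ᵥ* G = c := by
  rw [Submodule.mem_span_range_iff_exists_fun]
  simp only [Matrix.vecMul_eq_sum]

end Syndrome

/-- A basic generator matrix generates the common kernel of its syndrome matrices. -/
theorem mem_span_rows_iff_syndrome {K : Type*} [Field K] {k n : ℕ}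
    {G : Matrix (Fin k) (Fin n) K[X]} (hG : IsBasic G) (c : Fin n → K[X]) :
    c ∈ Submodule.span K[X] (Set.range fun i => G i) ↔
      ∀ φ : Fin k ↪ Fin n, c ᵥ* syndromeMatrix G φ = 0 := by
  constructor
  · intro hc φ
    obtain ⟨u, rfl⟩ := (mem_span_rows_iff_exists_vecMul G c).1 hc
    rw [Matrix.vecMul_vecMul, mul_syndromeMatrix, Matrix.vecMul_zero]
  · intro h
    set C := Submodule.span K[X] (Set.range fun i => G i) with hC
    have hsub : Ideal.span (maximalMinors G) ≤ C.colon {c} := by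
      rw [Ideal.span_le]
      rintro _ ⟨φ, rfl⟩
      rw [SetLike.mem_coe, Submodule.mem_colon_singleton, hC, mem_span_rows_iff_exists_vecMul]
      have hφ := h φ
      rw [syndromeMatrix, Matrix.vecMul_sub, sub_eq_zero, Matrix.vecMul_smul, Matrix.vecMul_one,
        ← Matrix.vecMul_vecMul] at hφ
      exact ⟨_, hφ.symm⟩
    have h1 : (1 : K[X]) ∈ C.colon {c} := hsub (by
      rw [show Ideal.span (maximalMinors G) = ⊤ from hG]; trivial)
    simpa [Submodule.mem_colon_singleton] using h1

/-- A specialization of `G` that is basic generates the common kernel of the specialized syndrome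
matrices of `G`. -/
theorem mem_span_map_rows_iff {R K : Type*} [CommRing R] [Field K] {k n : ℕ} {f : R →+* K}
    (G : Fin k → Fin n → R[X]) (hG : IsBasic fun i j => (G i j).map f) (c : Fin n → K[X]) :
    c ∈ Submodule.span K[X] (Set.range fun i j => (G i j).map f) ↔
      ∀ (φ : Fin k ↪ Fin n) (l : Fin n),
        ∑ j, c j * (syndromeMatrix (Matrix.of G) φ j l).map f = 0 := by
  have hspan := mem_span_rows_iff_syndrome (G := (Matrix.of G).map (mapRingHom f)) hG c
  refine hspan.trans (forall_congr' fun φ => ?_)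
  rw [syndromeMatrix_map, funext_iff]
  simp only [Matrix.vecMul, dotProduct, Matrix.map_apply, coe_mapRingHom, Pi.zero_apply]

/-- The rows of a basic matrix with at least one row span a nonzero code. -/
theorem exists_ne_zero_mem_span_rows {K : Type*} [Field K] {k n : ℕ} (hk : 0 < k)
    {G : Fin k → Fin n → K[X]} (hG : IsBasic G) :
    ∃ c ∈ Submodule.span K[X] (Set.range fun i => G i), c ≠ 0 := by
  refine ⟨G ⟨0, hk⟩, Submodule.subset_span ⟨_, rfl⟩, fun h0 => ?_⟩
  have hle : Ideal.span (maximalMinors G) ≤ ⊥ := by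
    rw [Ideal.span_le]
    rintro _ ⟨φ, rfl⟩
    exact Matrix.det_eq_zero_of_row_eq_zero ⟨0, hk⟩ fun j => congrFun h0 (φ j)
  rw [show Ideal.span (maximalMinors G) = ⊤ from hG] at hle
  exact top_ne_bot (le_bot_iff.1 hle)

section Descent

variable {K : Type*} [Field K] {n : ℕ} {ι : Type*}

/-- If a codeword has `m` consecutive zero coefficients, where `m` bounds the degree of the
parity checks `A`, then its tail after the gap is again a codeword. -/
theorem exists_tail_of_gap {A : ι → Fin n → K[X]} {m : ℕ}
    (hA : ∀ i j, (A i j).natDegree ≤ m) {c : Fin n → K[X]}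
    (hc : ∀ i, ∑ j, c j * A i j = 0) {t : ℕ}
    (hgap : ∀ j l, t ≤ l → l < t + m → (c j).coeff l = 0) :
    ∃ c' : Fin n → K[X], (∀ i, ∑ j, c' j * A i j = 0) ∧
      ∀ j l, (c' j).coeff l = (c j).coeff (l + (t + m)) := by
  let low : Fin n → K[X] := fun j => ∑ l ∈ Finset.range t, monomial l ((c j).coeff l)
  have hlow : ∀ j l, (low j).coeff l = if l < t then (c j).coeff l else 0 := by
    intro j l
    simp [low, coeff_monomial]
  have hdvd : ∀ j, X ^ (t + m) ∣ c j - low j := by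
    intro j
    rw [X_pow_dvd_iff]
    intro d hd
    rw [coeff_sub, hlow]
    split_ifs with h
    · simp
    · simp [hgap j d (not_lt.1 h) hd]
  choose c' hc' using hdvd
  refine ⟨c', fun i => ?_, fun j l => ?_⟩
  · have hsum : ∑ j, low j * A i j + X ^ (t + m) * ∑ j, c' j * A i j = 0 := by
      rw [← hc i, Finset.mul_sum, ← Finset.sum_add_distrib]
      refine Finset.sum_congr rfl fun j _ => ?_
      rw [← mul_assoc, ← hc' j]
      ring
    have hzero : ∑ j, low j * A i j = 0 := by
      ext e
      rw [coeff_zero]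
      rcases lt_or_ge e (t + m) with he | he
      · rw [eq_neg_of_add_eq_zero_left hsum, coeff_neg, coeff_X_pow_mul', if_neg (by omega),
          neg_zero]
      · rw [finsetSum_coeff]
        refine Finset.sum_eq_zero fun j _ => ?_
        rw [coeff_mul]
        refine Finset.sum_eq_zero fun x hx => ?_
        rw [Finset.HasAntidiagonal.mem_antidiagonal] at hx
        rcases lt_or_ge x.1 t with h | h
        · rw [coeff_eq_zero_of_natDegree_lt ((hA i j).trans_lt (by omega)), mul_zero]
        · rw [hlow, if_neg (by omega), zero_mul]
    rw [hzero, zero_add] at hsum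
    exact (mul_eq_zero.1 hsum).resolve_left (pow_ne_zero _ X_ne_zero)
  · have h := congrArg (fun p => p.coeff (l + (t + m))) (hc' j)
    simp only [coeff_X_pow_mul, coeff_sub, hlow] at h
    rw [if_neg (by omega), sub_zero] at h
    exact h.symm

/-- A word of weight less than `D` has a block of `m` consecutive zero coefficients
among its first `D` blocks. -/
theorem exists_zero_block {c : Fin n → K[X]} {D m : ℕ} (hw : polyWeight c < D) :
    ∃ b < D, ∀ j l, b * m ≤ l → l < b * m + m → (c j).coeff l = 0 := by
  classical
  let T : Finset (Σ _ : Fin n, ℕ) := Finset.univ.sigma fun j => (c j).support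
  have hcard : (T.image fun x => x.2 / m).card < (Finset.range D).card := by
    rw [Finset.card_range]
    refine Finset.card_image_le.trans_lt ?_
    rwa [Finset.card_sigma]
  obtain ⟨b, hb, hbT⟩ := Finset.exists_mem_notMem_of_card_lt_card hcard
  refine ⟨b, Finset.mem_range.1 hb, fun j l h1 h2 => ?_⟩
  by_contra hne
  refine hbT (Finset.mem_image.2 ⟨⟨j, l⟩, by simpa [T] using hne, ?_⟩)
  exact Nat.div_eq_of_lt_le h1 (by rw [Nat.succ_mul]; exact h2)

/-- If a code defined by parity checks of degree at most `m` has a nonzero word of weight less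
than `D`, it has one of degree less than `D * m`. -/
theorem exists_short_word {A : ι → Fin n → K[X]} {m D : ℕ} (hm : 0 < m)
    (hA : ∀ i j, (A i j).natDegree ≤ m) {c : Fin n → K[X]} (hc0 : c ≠ 0)
    (hc : ∀ i, ∑ j, c j * A i j = 0) (hw : polyWeight c < D) :
    ∃ c' : Fin n → K[X], c' ≠ 0 ∧ (∀ i, ∑ j, c' j * A i j = 0) ∧ polyWeight c' < D ∧
      ∀ j l, D * m ≤ l → (c' j).coeff l = 0 := by
  obtain ⟨N, hN⟩ : ∃ N, ∀ j l, N ≤ l → (c j).coeff l = 0 := by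
    refine ⟨(Finset.univ.sup fun j => (c j).natDegree) + 1, fun j l hl => ?_⟩
    refine coeff_eq_zero_of_natDegree_lt (lt_of_lt_of_le (Nat.lt_succ_of_le ?_) hl)
    exact Finset.le_sup (f := fun j => (c j).natDegree) (Finset.mem_univ j)
  induction N using Nat.strong_induction_on generalizing c with
  | _ N ih =>
    by_cases hshort : ∀ j l, D * m ≤ l → (c j).coeff l = 0
    · exact ⟨c, hc0, hc, hw, hshort⟩
    push Not at hshort
    obtain ⟨j₀, l₀, hl₀, hne⟩ := hshort
    obtain ⟨b, hb, hgap⟩ := exists_zero_block (m := m) hw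
    obtain ⟨c', hc', hcoeff⟩ := exists_tail_of_gap hA hc hgap
    have hbD : b * m + m ≤ D * m := by
      rw [← Nat.succ_mul]
      exact Nat.mul_le_mul_right m hb
    have hlN : l₀ < N := by
      by_contra h
      exact hne (hN j₀ l₀ (not_lt.1 h))
    refine ih (N - (b * m + m)) (by omega) ?_ hc' ?_ ?_
    · intro h
      apply hne
      have := hcoeff j₀ (l₀ - (b * m + m))
      rw [Nat.sub_add_cancel (hbD.trans hl₀), h] at this
      simpa using this.symm
    · refine lt_of_le_of_lt (Finset.sum_le_sum fun j _ => ?_) hw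
      refine Finset.card_le_card_of_injOn (fun l => l + (b * m + m)) ?_
        (add_left_injective _).injOn
      intro l hl
      simpa [hcoeff] using hl
    · intro j l hl
      rw [hcoeff]
      exact hN _ _ (by omega)

end Descent

/-- Over a field, a matrix has injective `mulVec` iff some maximal minor is nonzero. -/
theorem mulVec_injective_iff_exists_det_ne_zero {K ρ σ : Type*} [Field K] [Fintype ρ] [Fintype σ]
    [DecidableEq σ] (M : Matrix ρ σ K) :
    (∀ v, M *ᵥ v = 0 → v = 0) ↔ ∃ f : σ → ρ, (M.submatrix f id).det ≠ 0 := by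
  constructor
  · intro h
    have hinj : Function.Injective M.mulVecLin := by
      rw [injective_iff_map_eq_zero]
      exact h
    have hrank : Module.finrank K (Submodule.span K (Set.range M.row)) = Fintype.card σ := by
      rw [← Matrix.rank_eq_finrank_span_row, Matrix.rank, LinearMap.finrank_range_of_inj hinj,
        Module.finrank_fintype_fun_eq_card]
    obtain ⟨g, hg, -, hli⟩ := Submodule.exists_fun_fin_finrank_span_eq K (Set.range M.row)
    choose f hf using hg
    let e : σ ≃ Fin (Module.finrank K (Submodule.span K (Set.range M.row))) :=
      Fintype.equivFinOfCardEq hrank.symm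
    refine ⟨f ∘ e, ?_⟩
    have hrow : (M.submatrix (f ∘ e) id).row = g ∘ e := by
      funext i
      exact hf (e i)
    rw [← isUnit_iff_ne_zero, ← Matrix.isUnit_iff_isUnit_det,
      ← Matrix.linearIndependent_rows_iff_isUnit, hrow]
    exact hli.comp _ e.injective
  · rintro ⟨f, hf⟩ v hv
    refine Matrix.eq_zero_of_mulVec_eq_zero hf ?_
    funext i
    exact congrFun hv (f i)

/-- A condition on points of affine space is Zariski open if it is the nonvanishing of at least
one of finitely many polynomials. -/
def IsZariskiOpen {K τ : Type*} [CommRing K] (P : (τ → K) → Prop) : Prop :=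
  ∃ s : Finset (MvPolynomial τ K), ∀ α, P α ↔ ∃ p ∈ s, MvPolynomial.eval α p ≠ 0

theorem IsZariskiOpen.finset_forall {K τ κ : Type*} [Field K] {P : κ → (τ → K) → Prop}
    (I : Finset κ) (h : ∀ x ∈ I, IsZariskiOpen (P x)) :
    IsZariskiOpen fun α => ∀ x ∈ I, P x α := by
  classical
  induction I using Finset.induction_on with
  | empty => exact ⟨{1}, fun α => by simp⟩
  | insert a I _ ih =>
    obtain ⟨s, hs⟩ := h a (Finset.mem_insert_self a I)
    obtain ⟨t, ht⟩ := ih fun x hx => h x (Finset.mem_insert_of_mem hx)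
    refine ⟨Finset.image₂ (· * ·) s t, fun α => ?_⟩
    beta_reduce
    rw [Finset.forall_mem_insert, hs, show (∀ x ∈ I, P x α) ↔ _ from ht α]
    constructor
    · rintro ⟨⟨p, hp, hp'⟩, q, hq, hq'⟩
      exact ⟨p * q, Finset.mem_image₂_of_mem hp hq, by simp [hp', hq']⟩
    · rintro ⟨_, hpq, hne⟩
      obtain ⟨p, hp, q, hq, rfl⟩ := Finset.mem_image₂.1 hpq
      rw [map_mul] at hne
      exact ⟨⟨p, hp, left_ne_zero_of_mul hne⟩, q, hq, right_ne_zero_of_mul hne⟩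

section Family

variable {F K : Type*} [Field F] [Field K] [Algebra F K] {τ : Type*} {n : ℕ}

theorem isZariskiOpen_mulVec_injective {ρ σ : Type*} [Fintype ρ] [Fintype σ]
    (M : Matrix ρ σ (MvPolynomial τ F)) :
    IsZariskiOpen fun α : τ → K =>
      ∀ v, M.map (MvPolynomial.aeval α : MvPolynomial τ F →ₐ[F] K) *ᵥ v = 0 → v = 0 := by
  classical
  refine ⟨Finset.univ.image fun f : σ → ρ =>
    MvPolynomial.map (algebraMap F K) (M.submatrix f id).det, fun α => ?_⟩
  have hdet : ∀ f : σ → ρ, MvPolynomial.eval α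
      (MvPolynomial.map (algebraMap F K) (M.submatrix f id).det) =
      ((M.map (MvPolynomial.aeval α : MvPolynomial τ F →ₐ[F] K)).submatrix f id).det := by
    intro f
    rw [MvPolynomial.eval_map, ← MvPolynomial.aeval_def, AlgHom.map_det]
    rfl
  beta_reduce
  rw [mulVec_injective_iff_exists_det_ne_zero]
  simp [hdet]

/-- The word with coefficients `v` on the support `S`. -/
noncomputable def wordOfCoeffs (S : Finset (Fin n × ℕ)) (v : S → K) (j : Fin n) : K[X] :=
  ∑ s : S, if s.1.1 = j then monomial s.1.2 (v s) else 0

theorem coeff_wordOfCoeffs (S : Finset (Fin n × ℕ)) (v : S → K) (j : Fin n) (l : ℕ) :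
    (wordOfCoeffs S v j).coeff l = if h : (j, l) ∈ S then v ⟨(j, l), h⟩ else 0 := by
  classical
  rw [wordOfCoeffs, finsetSum_coeff]
  split_ifs with h
  · rw [Finset.sum_eq_single ⟨(j, l), h⟩]
    · simp
    · rintro ⟨⟨j', l'⟩, hs⟩ - hne
      by_cases hj : j' = j
      · subst hj
        have hl : l' ≠ l := by
          rintro rfl
          exact hne rfl
        simp [coeff_monomial, hl]
      · simp [hj]
    · simp
  · refine Finset.sum_eq_zero ?_
    rintro ⟨⟨j', l'⟩, hs⟩ -
    by_cases hj : j' = j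
    · subst hj
      have hl : l' ≠ l := by
        rintro rfl
        exact h hs
      simp [coeff_monomial, hl]
    · simp [hj]

theorem sum_wordOfCoeffs_mul (S : Finset (Fin n × ℕ)) (v : S → K) (a : Fin n → K[X]) :
    ∑ j, wordOfCoeffs S v j * a j = ∑ s : S, C (v s) * (X ^ s.1.2 * a s.1.1) := by
  simp only [wordOfCoeffs, Finset.sum_mul]
  rw [Finset.sum_comm]
  refine Finset.sum_congr rfl fun s _ => ?_
  simp [ite_mul, ← C_mul_X_pow_eq_monomial, mul_assoc]

/-- For a fixed finite support, having no nonzero word on that support is an open condition. -/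
theorem isZariskiOpen_no_word_on_support {ι : Type*} [Fintype ι]
    (A : ι → Fin n → (MvPolynomial τ F)[X]) (S : Finset (Fin n × ℕ)) :
    IsZariskiOpen fun α : τ → K => ∀ c : Fin n → K[X],
      (∀ j l, (j, l) ∉ S → (c j).coeff l = 0) →
      (∀ i, ∑ j, c j * (A i j).map
        (MvPolynomial.aeval α : MvPolynomial τ F →ₐ[F] K).toRingHom = 0) → c = 0 := by
  classical
  obtain ⟨N, hN⟩ : ∃ N, ∀ i, ∀ s ∈ S, (X ^ s.2 * A i s.1).natDegree < N := by
    refine ⟨(Finset.univ.sup fun i => S.sup fun s => (X ^ s.2 * A i s.1).natDegree) + 1,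
      fun i s hs => Nat.lt_succ_of_le ?_⟩
    exact (Finset.le_sup (f := fun s : Fin n × ℕ => (X ^ s.2 * A i s.1).natDegree) hs).trans
      (Finset.le_sup (f := fun i => S.sup fun s => (X ^ s.2 * A i s.1).natDegree)
        (Finset.mem_univ i))
  let M : Matrix (ι × Fin N) S (MvPolynomial τ F) :=
    Matrix.of fun x s => (X ^ s.1.2 * A x.1 s.1.1).coeff x.2
  obtain ⟨p, hp⟩ := isZariskiOpen_mulVec_injective (K := K) M
  refine ⟨p, fun α => ?_⟩
  rw [← hp α]
  set f := (MvPolynomial.aeval α : MvPolynomial τ F →ₐ[F] K).toRingHom with hf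
  have hsum : ∀ (v : S → K) i e, (∑ j, wordOfCoeffs S v j * (A i j).map f).coeff e =
      ∑ s : S, f ((X ^ s.1.2 * A i s.1.1).coeff e) * v s := by
    intro v i e
    rw [sum_wordOfCoeffs_mul, finsetSum_coeff]
    refine Finset.sum_congr rfl fun s _ => ?_
    rw [coeff_C_mul, ← coeff_map, Polynomial.map_mul, Polynomial.map_pow, map_X, mul_comm]
  have hker : ∀ v : S → K, (∀ i, ∑ j, wordOfCoeffs S v j * (A i j).map f = 0) ↔
      M.map (MvPolynomial.aeval α : MvPolynomial τ F →ₐ[F] K) *ᵥ v = 0 := by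
    intro v
    constructor
    · intro h
      funext x
      have hx := hsum v x.1 x.2
      rw [h, coeff_zero] at hx
      exact hx.symm
    · intro h i
      ext e
      rw [hsum, coeff_zero]
      rcases lt_or_ge e N with he | he
      · exact congrFun h (i, ⟨e, he⟩)
      · refine Finset.sum_eq_zero fun s _ => ?_
        rw [coeff_eq_zero_of_natDegree_lt ((hN i s.1 s.2).trans_le he), map_zero, zero_mul]
  constructor
  · intro h v hv
    have h0 := h (wordOfCoeffs S v) (fun j l hjl => by rw [coeff_wordOfCoeffs, dif_neg hjl])
      ((hker v).2 hv)
    funext s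
    have hs := coeff_wordOfCoeffs S v s.1.1 s.1.2
    rw [h0, dif_pos s.2] at hs
    simpa using hs.symm
  · intro h c hcS hc
    have hcv : c = wordOfCoeffs S fun s => (c s.1.1).coeff s.1.2 := by
      funext j
      ext l
      rw [coeff_wordOfCoeffs]
      split_ifs with hjl
      · rfl
      · exact hcS j l hjl
    have hv := h _ ((hker _).1 (hcv ▸ hc))
    rw [hcv, hv]
    funext j
    ext l
    simp [coeff_wordOfCoeffs]

/-- For codes given by parity checks depending polynomially on parameters, having all nonzero
words of weight at least `D` is an open condition. -/
theorem isZariskiOpen_weight_ge {ι : Type*} [Fintype ι]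
    (A : ι → Fin n → (MvPolynomial τ F)[X]) (D : ℕ) :
    IsZariskiOpen fun α : τ → K => ∀ c : Fin n → K[X], c ≠ 0 →
      (∀ i, ∑ j, c j * (A i j).map
        (MvPolynomial.aeval α : MvPolynomial τ F →ₐ[F] K).toRingHom = 0) → D ≤ polyWeight c := by
  classical
  obtain ⟨m, hm, hA⟩ : ∃ m, 0 < m ∧ ∀ i j, (A i j).natDegree ≤ m := by
    refine ⟨(Finset.univ.sup fun x : ι × Fin n => (A x.1 x.2).natDegree) + 1, Nat.succ_pos _,
      fun i j => Nat.le_succ_of_le ?_⟩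
    exact Finset.le_sup (f := fun x : ι × Fin n => (A x.1 x.2).natDegree)
      (Finset.mem_univ (i, j))
  obtain ⟨p, hp⟩ := IsZariskiOpen.finset_forall
    ((Finset.univ ×ˢ Finset.range (D * m)).powerset.filter fun S => S.card < D)
    fun S _ => isZariskiOpen_no_word_on_support (K := K) A S
  refine ⟨p, fun α => ?_⟩
  rw [← hp α]
  constructor
  · intro h S hS c hcS hc
    by_contra hc0
    refine absurd (h c hc0 hc) (not_le.2 (lt_of_le_of_lt ?_ (Finset.mem_filter.1 hS).2))
    rw [polyWeight, ← Finset.card_sigma]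
    refine Finset.card_le_card_of_injOn (fun x => (x.1, x.2)) ?_ ?_
    · rintro ⟨j, l⟩ hx
      by_contra hjl
      simp [hcS j l hjl] at hx
    · rintro ⟨j, l⟩ - ⟨j', l'⟩ - hxy
      simpa using hxy
  · intro h c hc0 hc
    by_contra hw
    obtain ⟨c', hc'0, hc', hw', hdeg⟩ := exists_short_word hm
      (fun i j => natDegree_map_le.trans (hA i j)) hc0 hc (not_le.1 hw)
    refine hc'0 (h ((Finset.univ.sigma fun j => (c' j).support).image fun x => (x.1, x.2))
      ?_ c' ?_ hc')
    · rw [Finset.mem_filter, Finset.mem_powerset]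
      refine ⟨?_, Finset.card_image_le.trans_lt (by rwa [Finset.card_sigma])⟩
      intro x hx
      obtain ⟨⟨j, l⟩, hjl, rfl⟩ := Finset.mem_image.1 hx
      have hl : l < D * m := by
        by_contra hl
        simp [hdeg j l (not_lt.1 hl)] at hjl
      simpa using hl
    · intro j l hjl
      by_contra hne
      exact hjl (Finset.mem_image.2 ⟨⟨j, l⟩, by simpa using hne, rfl⟩)

end Family

theorem le_freeDist_iff {K : Type*} [Field K] {n : ℕ} {C : Submodule K[X] (Fin n → K[X])}
    (hC : ∃ c ∈ C, c ≠ 0) (D : ℕ) :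
    D ≤ freeDist C ↔ ∀ c ∈ C, c ≠ 0 → D ≤ polyWeight c := by
  obtain ⟨c₀, hc₀, hne⟩ := hC
  have hnonempty : {d | ∃ c ∈ C, c ≠ 0 ∧ polyWeight c = d}.Nonempty := ⟨_, c₀, hc₀, hne, rfl⟩
  rw [freeDist, le_csInf_iff (OrderBot.bddBelow _) hnonempty]
  constructor
  · exact fun h c hc h0 => h _ ⟨c, hc, h0, rfl⟩
  · rintro h _ ⟨c, hc, h0, rfl⟩
    exact h c hc h0

/-- For a family of convolutional codes over a Zariski open parameter set
`U ⊆ K^{r+1}` (`K` the algebraic closure of a finite field) whose members all have a canonical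
generator matrix of degree `δ`, the MDS locus
`{α ∈ U : d_free(C_α) ≥ (n-k)(⌊δ/k⌋+1)+δ+1}` is Zariski open in `U`: it is the locus in `U`
where at least one of finitely many polynomials does not vanish. -/
theorem MDS_locus_open {F : Type*} [Field F] [Fintype F]
    {K : Type*} [Field K] [Algebra F K] [IsAlgClosure F K] {k n r δ : ℕ} (hk : 0 < k)
    (𝒢 : Fin k → Fin n → Polynomial (MvPolynomial (Fin (r + 1)) F))
    (U : Set (Fin (r + 1) → K))
    (hU : ∃ s : Finset (MvPolynomial (Fin (r + 1)) K),
      Uᶜ = {α | ∀ p ∈ s, MvPolynomial.eval α p = 0})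
    (hcan : ∀ α ∈ U,
      IsCanonical (fun i => fun j => (𝒢 i j).map
        (MvPolynomial.aeval α : MvPolynomial (Fin (r + 1)) F →ₐ[F] K).toRingHom) ∧
      degCode (fun i => fun j => (𝒢 i j).map
        (MvPolynomial.aeval α : MvPolynomial (Fin (r + 1)) F →ₐ[F] K).toRingHom) = δ) :
    ∃ s : Finset (MvPolynomial (Fin (r + 1)) K), ∀ α ∈ U,
      ((n - k) * (δ / k + 1) + δ + 1 ≤
          freeDist (Submodule.span (Polynomial K) (Set.range fun i => fun j =>
            (𝒢 i j).map
              (MvPolynomial.aeval α : MvPolynomial (Fin (r + 1)) F →ₐ[F] K).toRingHom))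
        ↔ ∃ p ∈ s, MvPolynomial.eval α p ≠ 0) := by
  obtain ⟨s, hs⟩ := isZariskiOpen_weight_ge (F := F) (K := K)
    (fun (x : (Fin k ↪ Fin n) × Fin n) j => syndromeMatrix (Matrix.of 𝒢) x.1 j x.2)
    ((n - k) * (δ / k + 1) + δ + 1)
  refine ⟨s, fun α hα => ?_⟩
  have hbasic := (hcan α hα).1.1
  rw [le_freeDist_iff (exists_ne_zero_mem_span_rows hk hbasic), ← hs α]
  simp only [mem_span_map_rows_iff 𝒢 hbasic, Prod.forall]
  exact forall_congr' fun c => forall_comm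
end

section
/- Let 𝔽 be a finite field and let 𝒢(z) be a k×n matrix with entries in 𝔽[λ₀][z]. Let q₁,…,q_t ∈ 𝔽[λ₀] be polynomials, and for any finite field extension 𝔽′ of 𝔽 set U(𝔽′) = {α ∈ 𝔽′ : q_i(α) ≠ 0 for all i}. Assume that for every finite extension 𝔽′ and every α ∈ U(𝔽′) the specialized matrix 𝒢_α(z) over 𝔽′[z] is a canonical (basic and reduced) generator matrix of degree δ, and denote by C_α^{𝔽′} the convolutional code over 𝔽′ it generates. Suppose there exist a finite extension 𝔽″ of 𝔽 and α ∈ U(𝔽″) such that C_α^{𝔽″} is MDS. Then there exists N ∈ ℕ, depending only on the family, such that for every finite extension 𝔽′ of 𝔽 the number of α ∈ U(𝔽′) for which C_α^{𝔽′} is not MDS is at most N. -/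
open Polynomial

/-- A finite field extension of `F`, bundled as a structure. -/
structure FinFieldExt (F : Type) [Field F] : Type 1 where
  carrier : Type
  [field : Field carrier]
  [alg : Algebra F carrier]
  [findim : FiniteDimensional F carrier]

attribute [instance] FinFieldExt.field FinFieldExt.alg FinFieldExt.findim

/-- The codeword `u G` of a message `u` under the generator matrix `G`. -/
noncomputable def encode {F : Type*} [Field F] {k n : ℕ} (G : Fin k → Fin n → Polynomial F)
    (u : Fin k → Polynomial F) : Fin n → Polynomial F :=
  fun j => ∑ i, u i * G i j

/-- The positions of the nonzero coefficients of a vector of polynomials. -/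
noncomputable def coeffSupport {F : Type*} [Field F] {n : ℕ} (c : Fin n → Polynomial F) :
    Finset (Fin n × ℕ) :=
  (Finset.univ.sigma fun j => (c j).support).map (Equiv.sigmaEquivProd (Fin n) ℕ).toEmbedding

section Field

variable {K : Type*} [Field K] {k n : ℕ}

theorem mem_coeffSupport {c : Fin n → K[X]} {p : Fin n × ℕ} :
    p ∈ coeffSupport c ↔ (c p.1).coeff p.2 ≠ 0 := by
  simp [coeffSupport, Finset.mem_map_equiv]

theorem card_coeffSupport (c : Fin n → K[X]) : (coeffSupport c).card = polyWeight c := by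
  simp [coeffSupport, polyWeight]

theorem polyWeight_le_of_coeff {c d : Fin n → K[X]}
    (h : ∀ j t, (c j).coeff t ≠ 0 → (d j).coeff t ≠ 0) : polyWeight c ≤ polyWeight d := by
  rw [← card_coeffSupport, ← card_coeffSupport]
  refine Finset.card_le_card fun p hp => ?_
  rw [mem_coeffSupport] at hp ⊢
  exact h _ _ hp

theorem polyWeight_le_X_pow_mul (c : Fin n → K[X]) (b : ℕ) :
    polyWeight c ≤ polyWeight fun j => X ^ b * c j := by
  refine Finset.sum_le_sum fun j _ => Finset.card_le_card_of_injOn (· + b) ?_ ?_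
  · intro t ht
    simpa [coeff_X_pow_mul] using ht
  · intro s _ t _ h
    exact Nat.add_right_cancel h

theorem freeDist_le_of_encode_ne_zero {G : Fin k → Fin n → K[X]} {u : Fin k → K[X]}
    (h : encode G u ≠ 0) :
    freeDist (Submodule.span K[X] (Set.range G)) ≤ polyWeight (encode G u) := by
  refine Nat.sInf_le ⟨_, (Submodule.mem_span_range_iff_exists_fun _).2 ⟨u, ?_⟩, h, rfl⟩
  ext1 j
  simp [encode]

theorem exists_encode_of_freeDist_lt {G : Fin k → Fin n → K[X]} {u : Fin k → K[X]}
    (h : encode G u ≠ 0) {D : ℕ} (hD : freeDist (Submodule.span K[X] (Set.range G)) < D) :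
    ∃ v, v ≠ 0 ∧ polyWeight (encode G v) < D := by
  have hne : {d | ∃ c ∈ Submodule.span K[X] (Set.range G), c ≠ 0 ∧ polyWeight c = d}.Nonempty :=
    ⟨_, _, (Submodule.mem_span_range_iff_exists_fun _).2 ⟨u, by ext1 j; simp [encode]⟩, h, rfl⟩
  obtain ⟨c, hc, hc0, hcd⟩ := Nat.sInf_mem hne
  obtain ⟨v, rfl⟩ := (Submodule.mem_span_range_iff_exists_fun _).1 hc
  have hv : ∑ i, v i • G i = encode G v := by
    ext1 j
    simp [encode]
  refine ⟨v, ?_, ?_⟩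
  · rintro rfl
    simp at hc0
  · rw [← hv, hcd]
    exact hD

theorem natDegree_encode_le {G : Fin k → Fin n → K[X]} {u : Fin k → K[X]} {a b : ℕ}
    (hu : ∀ i, (u i).natDegree ≤ a) (hG : ∀ i j, (G i j).natDegree ≤ b) (j : Fin n) :
    (encode G u j).natDegree ≤ a + b :=
  natDegree_sum_le_of_forall_le _ _ fun i _ => natDegree_mul_le_of_le (hu i) (hG i j)

theorem natDegree_det_le_of_forall_le {A : Matrix (Fin k) (Fin k) K[X]} {B : ℕ}
    (hA : ∀ i j, (A i j).natDegree ≤ B) : A.det.natDegree ≤ k * B := by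
  rw [Matrix.det_apply]
  refine natDegree_sum_le_of_forall_le _ _ fun σ _ => ?_
  refine (natDegree_smul_le _ _).trans ((natDegree_prod_le _ _).trans ?_)
  simpa using Finset.sum_le_sum fun i (_ : i ∈ Finset.univ) => hA (σ i) i

theorem natDegree_adjugate_le_of_forall_le {A : Matrix (Fin k) (Fin k) K[X]} {B : ℕ}
    (hA : ∀ i j, (A i j).natDegree ≤ B) (i j : Fin k) : (A.adjugate i j).natDegree ≤ k * B := by
  rw [Matrix.adjugate_apply]
  refine natDegree_det_le_of_forall_le fun a b => ?_
  rw [Matrix.updateRow_apply]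
  split_ifs
  · rw [Pi.single_apply]
    split_ifs <;> simp
  · exact hA a b

/-- Bézout coefficients of bounded degree for a finite coprime family. -/
theorem exists_bezout_natDegree_le {ι : Type*} [Fintype ι] {p : ι → K[X]} {B : ℕ}
    (hp : ∀ i, (p i).natDegree ≤ B) (h : Ideal.span (Set.range p) = ⊤) :
    ∃ a : ι → K[X], (∀ i, (a i).natDegree ≤ 2 * B) ∧ ∑ i, a i * p i = 1 := by
  classical
  obtain ⟨a, ha⟩ := Ideal.mem_span_range_iff_exists_fun.1
    (h ▸ Submodule.mem_top : (1 : K[X]) ∈ Ideal.span (Set.range p))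
  obtain ⟨i₀, hi₀⟩ : ∃ i, p i ≠ 0 := by
    by_contra! hall
    simp [hall] at ha
  set r : ι → K[X] := fun i => a i % p i₀
  have hrdeg : ∀ i, (r i).natDegree ≤ B := fun i => by
    by_cases h0 : (p i₀).natDegree = 0
    · obtain ⟨c, hc⟩ := natDegree_eq_zero.1 h0
      have hu : IsUnit (p i₀) := by
        rw [← hc]
        exact isUnit_C.2 (isUnit_iff_ne_zero.2 fun hc0 => hi₀ (by rw [← hc, hc0, C_0]))
      have : r i = 0 := (EuclideanDomain.mod_eq_zero).2 hu.dvd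
      simp [this]
    · exact (natDegree_mod_lt _ h0).le.trans (hp i₀)
  have hsplit := Finset.add_sum_erase Finset.univ (fun i => a i * p i) (Finset.mem_univ i₀)
  set s := ∑ i ∈ Finset.univ.erase i₀, r i * p i with hs
  obtain ⟨b, hb⟩ : p i₀ ∣ 1 - s := by
    refine ⟨a i₀ + ∑ i ∈ Finset.univ.erase i₀, (a i / p i₀) * p i, ?_⟩
    have : ∀ i, a i * p i = p i₀ * ((a i / p i₀) * p i) + r i * p i := fun i => by
      conv_lhs => rw [← EuclideanDomain.div_add_mod (a i) (p i₀)]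
      ring
    rw [Finset.sum_congr rfl fun i _ => this i, Finset.sum_add_distrib, ← Finset.mul_sum,
      ha] at hsplit
    rw [← hsplit]
    ring
  have hsdeg : (1 - s).natDegree ≤ 2 * B := by
    refine (natDegree_sub_le _ _).trans (max_le (by simp) ?_)
    refine natDegree_sum_le_of_forall_le _ _ fun i _ => ?_
    exact (natDegree_mul_le_of_le (hrdeg i) (hp i)).trans (by lia)
  have hbdeg : b.natDegree ≤ 2 * B := by
    by_cases hb0 : b = 0
    · simp [hb0]
    · rw [hb, natDegree_mul hi₀ hb0] at hsdeg
      lia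
  refine ⟨Function.update r i₀ b, fun i => ?_, ?_⟩
  · rw [Function.update_apply]
    split_ifs
    · exact hbdeg
    · exact (hrdeg i).trans (by lia)
  · rw [← Finset.add_sum_erase _ _ (Finset.mem_univ i₀), Function.update_self, mul_comm b, ← hb,
      Finset.sum_congr rfl fun i hi => by rw [Function.update_of_ne (Finset.ne_of_mem_erase hi)],
      ← hs, sub_add_cancel]

/-- A basic matrix has a polynomial right inverse of bounded degree. -/
theorem IsBasic.exists_right_inverse {G : Fin k → Fin n → K[X]} (hG : IsBasic G) {B : ℕ}
    (hB : ∀ i j, (G i j).natDegree ≤ B) :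
    ∃ H : Fin n → Fin k → K[X], (∀ j i, (H j i).natDegree ≤ 3 * (k * B)) ∧
      ∀ u, encode H (encode G u) = u := by
  classical
  let A : (Fin k ↪ Fin n) → Matrix (Fin k) (Fin k) K[X] := fun φ => Matrix.of fun i j => G i (φ j)
  have hA : ∀ φ i j, (A φ i j).natDegree ≤ B := fun φ i j => hB i (φ j)
  have hspan : Ideal.span (Set.range fun φ => (A φ).det) = ⊤ := by
    rw [← hG]
    congr 1
    ext p
    simp [maximalMinors, A, eq_comm]
  obtain ⟨a, ha, hsum⟩ :=
    exists_bezout_natDegree_le (fun φ => natDegree_det_le_of_forall_le (hA φ)) hspan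
  refine ⟨fun j i => ∑ φ, ∑ l, if φ l = j then a φ * (A φ).adjugate l i else 0, ?_, fun u => ?_⟩
  · refine fun j i => natDegree_sum_le_of_forall_le _ _ fun φ _ =>
      natDegree_sum_le_of_forall_le _ _ fun l _ => ?_
    split_ifs
    · exact (natDegree_mul_le_of_le (ha φ)
        (natDegree_adjugate_le_of_forall_le (hA φ) l i)).trans (by lia)
    · simp
  · have key : ∀ φ, Matrix.vecMul (fun l => encode G u (φ l)) (A φ).adjugate
        = (A φ).det • u := fun φ => by
      have : (fun l => encode G u (φ l)) = Matrix.vecMul u (A φ) := rfl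
      rw [this, Matrix.vecMul_vecMul, Matrix.mul_adjugate, Matrix.vecMul_smul, Matrix.vecMul_one]
    ext1 i
    calc encode (fun j i => ∑ φ, ∑ l, if φ l = j then a φ * (A φ).adjugate l i else 0)
          (encode G u) i
        = ∑ φ : Fin k ↪ Fin n, a φ * ∑ l, encode G u (φ l) * (A φ).adjugate l i := by
          conv_lhs => rw [encode]
          simp_rw [Finset.mul_sum]
          rw [Finset.sum_comm]
          refine Finset.sum_congr rfl fun φ _ => ?_
          rw [Finset.sum_comm]
          refine Finset.sum_congr rfl fun l _ => ?_
          simp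
          ring
      _ = ∑ φ : Fin k ↪ Fin n, a φ * ((A φ).det * u i) :=
          Finset.sum_congr rfl fun φ _ => congrArg (a φ * ·) (congrFun (key φ) i)
      _ = u i := by
          simp_rw [← mul_assoc]
          rw [← Finset.sum_mul, hsum, one_mul]

theorem exists_eq_add_X_pow_mul (p : K[X]) (b : ℕ) :
    ∃ r s : K[X], p = r + X ^ b * s ∧ ∀ t, b ≤ t → r.coeff t = 0 := by
  refine ⟨p %ₘ X ^ b, p /ₘ X ^ b, (modByMonic_add_div p _).symm, fun t ht => ?_⟩
  refine coeff_eq_zero_of_degree_lt ((degree_modByMonic_lt p (monic_X_pow b)).trans_le ?_)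
  rw [degree_X_pow]
  exact_mod_cast ht

theorem coeff_encode_eq_zero_of_window {G : Fin k → Fin n → K[X]} {u : Fin k → K[X]} {a h m : ℕ}
    (hG : ∀ i j, (G i j).natDegree ≤ h)
    (hu : ∀ i t, a ≤ t → t < a + h + m → (u i).coeff t = 0) (j : Fin n) {t : ℕ}
    (h₁ : a + h ≤ t) (h₂ : t < a + h + m) : (encode G u j).coeff t = 0 := by
  rw [encode, finsetSum_coeff]
  refine Finset.sum_eq_zero fun i _ => ?_
  rw [coeff_mul]
  refine Finset.sum_eq_zero fun x hx => ?_
  rw [Finset.HasAntidiagonal.mem_antidiagonal] at hx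
  by_cases hxh : x.2 ≤ h
  · rw [hu i x.1 (by lia) (by lia), zero_mul]
  · rw [coeff_eq_zero_of_natDegree_lt ((hG i j).trans_lt (not_le.1 hxh)), mul_zero]

theorem encode_add (G : Fin k → Fin n → K[X]) (u v : Fin k → K[X]) (j : Fin n) :
    encode G (fun i => u i + v i) j = encode G u j + encode G v j := by
  simp [encode, add_mul, Finset.sum_add_distrib]

theorem encode_X_pow_mul (G : Fin k → Fin n → K[X]) (u : Fin k → K[X]) (b : ℕ) :
    encode G (fun i => X ^ b * u i) = fun j => X ^ b * encode G u j := by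
  ext1 j
  simp [encode, Finset.mul_sum, mul_assoc]

/-- A message whose codeword vanishes on a long enough window splits into a shorter nonzero message
whose codeword has no larger weight. -/
theorem exists_shorter_of_window {G : Fin k → Fin n → K[X]} {H : Fin n → Fin k → K[X]} {B h : ℕ}
    (hB : ∀ i j, (G i j).natDegree ≤ B) (hh : ∀ j i, (H j i).natDegree ≤ h)
    (hGH : ∀ u, encode H (encode G u) = u) {u : Fin k → K[X]} (hu : u ≠ 0) {M a : ℕ}
    (hM : ∀ i, (u i).natDegree ≤ M + 1) (ha : a + h ≤ M + 1) (ha0 : 0 < a + h)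
    (hw : ∀ j t, a ≤ t → t < a + h + B → (encode G u j).coeff t = 0) :
    ∃ v, v ≠ 0 ∧ (∀ i, (v i).natDegree ≤ M) ∧
      polyWeight (encode G v) ≤ polyWeight (encode G u) := by
  choose r s hrs hr using fun i => exists_eq_add_X_pow_mul (u i) (a + h)
  have huw : ∀ i t, a + h ≤ t → t < a + h + B → (u i).coeff t = 0 := fun i t h₁ h₂ => by
    rw [← hGH u]
    exact coeff_encode_eq_zero_of_window hh hw i h₁ h₂
  have hu_eq : u = fun i => r i + X ^ (a + h) * s i := funext hrs
  by_cases hr0 : r = 0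
  · have hu' : u = fun i => X ^ (a + h) * s i := by
      rw [hu_eq, hr0]
      simp
    refine ⟨s, ?_, fun i => ?_, ?_⟩
    · rintro rfl
      exact hu (by rw [hu']; ext1 i; simp)
    · by_cases hs : s i = 0
      · simp [hs]
      · have := hM i
        rw [hu', natDegree_mul (pow_ne_zero _ X_ne_zero) hs, natDegree_X_pow] at this
        lia
    · rw [hu', encode_X_pow_mul]
      exact polyWeight_le_X_pow_mul _ _
  · refine ⟨r, hr0, fun i => ?_, polyWeight_le_of_coeff fun j t ht => ?_⟩
    · exact natDegree_le_iff_coeff_eq_zero.2 fun t ht => hr i t (by lia)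
    · have htB : t < a + h + B := by
        by_contra! htB
        refine ht ?_
        refine coeff_encode_eq_zero_of_window (a := a + h) (m := t + 1) hB
          (fun i t h₁ _ => hr i t h₁) j htB (by lia)
      have hs : ∀ i t, 0 ≤ t → t < a + h + B → (X ^ (a + h) * s i).coeff t = 0 := by
        intro i t _ h₂
        by_cases h₁ : a + h ≤ t
        · have := huw i t h₁ h₂
          rwa [hrs i, coeff_add, hr i t h₁, zero_add] at this
        · rw [coeff_X_pow_mul', if_neg h₁]
      have : (encode G (fun i => X ^ (a + h) * s i) j).coeff t = 0 := by
        rw [encode, finsetSum_coeff]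
        refine Finset.sum_eq_zero fun i _ => ?_
        rw [coeff_mul]
        refine Finset.sum_eq_zero fun x hx => ?_
        rw [Finset.HasAntidiagonal.mem_antidiagonal] at hx
        rw [hs i x.1 (Nat.zero_le _) (by lia), zero_mul]
      rw [hu_eq, encode_add, coeff_add, this, add_zero]
      exact ht

/-- If every one of `D` consecutive windows of length `W` carries a nonzero coefficient,
the weight is at least `D`. -/
theorem le_polyWeight_of_windows {c : Fin n → K[X]} {D W : ℕ}
    (h : ∀ s < D, ∃ j t, s * W ≤ t ∧ t < s * W + W ∧ (c j).coeff t ≠ 0) : D ≤ polyWeight c := by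
  choose j t h₁ h₂ h₃ using h
  have e : ∀ s hs, t s hs / W = s := fun s hs =>
    Nat.div_eq_of_lt_le (h₁ s hs) (by rw [add_mul, one_mul]; exact h₂ s hs)
  rw [← card_coeffSupport, ← Fintype.card_fin D, ← Finset.card_univ]
  refine Finset.card_le_card_of_injOn (fun s : Fin D => (j s s.2, t s s.2))
    (fun s _ => mem_coeffSupport.2 (h₃ s s.2)) fun s _ s' _ he => Fin.ext ?_
  have ht : t s s.2 = t s' s'.2 := (Prod.ext_iff.1 he).2
  rw [← e s s.2, ht, e s' s'.2]

/-- Low-weight codewords can be found among messages of bounded degree. -/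
theorem exists_natDegree_le_of_polyWeight_lt {G : Fin k → Fin n → K[X]} {H : Fin n → Fin k → K[X]}
    {B h D : ℕ} (hB : ∀ i j, (G i j).natDegree ≤ B) (hh : ∀ j i, (H j i).natDegree ≤ h)
    (hh0 : 0 < h) (hGH : ∀ u, encode H (encode G u) = u) {u : Fin k → K[X]} (hu : u ≠ 0)
    (hD : polyWeight (encode G u) < D) :
    ∃ v, v ≠ 0 ∧ (∀ i, (v i).natDegree ≤ D * (h + B)) ∧ polyWeight (encode G v) < D := by
  obtain ⟨M, hM⟩ : ∃ M, ∀ i, (u i).natDegree ≤ M :=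
    ⟨Finset.univ.sup fun i => (u i).natDegree, fun i =>
      Finset.le_sup (f := fun i => (u i).natDegree) (Finset.mem_univ i)⟩
  induction M generalizing u with
  | zero => exact ⟨u, hu, fun i => (hM i).trans (Nat.zero_le _), hD⟩
  | succ M ih =>
    by_cases hML : M + 1 ≤ D * (h + B)
    · exact ⟨u, hu, fun i => (hM i).trans hML, hD⟩
    obtain ⟨s, hs, hw⟩ : ∃ s < D, ∀ j t, s * (h + B) ≤ t → t < s * (h + B) + (h + B) →
        (encode G u j).coeff t = 0 := by
      by_contra! hcon
      exact absurd (le_polyWeight_of_windows hcon) (not_le.2 hD)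
    have hsD : s * (h + B) + (h + B) ≤ D * (h + B) := by
      rw [← Nat.succ_mul]
      exact Nat.mul_le_mul_right _ hs
    obtain ⟨v, hv, hvM, hvw⟩ := exists_shorter_of_window (a := s * (h + B)) hB hh hGH hu hM
      (by lia) (by lia) (fun j t h₁ h₂ => hw j t h₁ (by lia))
    exact ih hv (hvw.trans_lt hD) hvM

/-- The generalized Singleton bound, witnessed by a nonzero message. -/
theorem exists_polyWeight_encode_le {G : Fin k → Fin n → K[X]} {δ : ℕ} (hk : 0 < k) (hkn : k ≤ n)
    (hδ : ∑ i, rowDeg G i = δ) :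
    ∃ u, u ≠ 0 ∧ polyWeight (encode G u) ≤ (n - k) * (δ / k + 1) + δ + 1 := by
  set m := δ / k
  have hd : δ < k * (m + 1) := Nat.lt_mul_div_succ δ hk
  have hkn' : k * (m + 1) ≤ n * (m + 1) := Nat.mul_le_mul_right _ hkn
  have hmul : (n - k) * (m + 1) = n * (m + 1) - k * (m + 1) := Nat.sub_mul _ _ _
  obtain ⟨Z, hZ, hZc⟩ := Finset.exists_subset_card_eq
    (s := (Finset.univ : Finset (Fin n)) ×ˢ Finset.range (m + 1)) (n := k * (m + 1) - δ - 1)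
    (by simp; lia)
  have hfr : ∀ d, Module.finrank K (degreeLT K d) = d := fun d => by
    rw [(degreeLTEquiv K d).finrank_eq, Module.finrank_fin_fun]
  have : ∀ d, FiniteDimensional K (degreeLT K d) := fun d =>
    (degreeLTEquiv K d).symm.finiteDimensional
  let f : ((i : Fin k) → degreeLT K (m + 1 - rowDeg G i)) →ₗ[K] (Z → K) := LinearMap.pi fun z =>
    ∑ i, (lcoeff K z.1.2 ∘ₗ LinearMap.mulRight K (G i z.1.1) ∘ₗ (degreeLT K _).subtype) ∘ₗ
      LinearMap.proj i
  have hV : k * (m + 1) - δ ≤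
      Module.finrank K ((i : Fin k) → degreeLT K (m + 1 - rowDeg G i)) := by
    rw [Module.finrank_pi_fintype]
    simp_rw [hfr]
    have : k * (m + 1) ≤ ∑ i, (m + 1 - rowDeg G i) + ∑ i, rowDeg G i := by
      rw [← Finset.sum_add_distrib]
      simpa using Finset.sum_le_sum fun i (_ : i ∈ (Finset.univ : Finset (Fin k))) =>
        (by lia : m + 1 ≤ m + 1 - rowDeg G i + rowDeg G i)
    lia
  have hker : LinearMap.ker f ≠ ⊥ := LinearMap.ker_ne_bot_of_finrank_lt (by
    rw [Module.finrank_fintype_fun_eq_card, Fintype.card_coe, hZc]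
    exact lt_of_lt_of_le (by lia) hV)
  obtain ⟨v, hv, hv0⟩ := Submodule.exists_mem_ne_zero_of_ne_bot hker
  refine ⟨fun i => (v i : K[X]), fun h => hv0 ?_, ?_⟩
  · ext1 i
    exact Subtype.ext (congrFun h i)
  have hsub : coeffSupport (encode G fun i => (v i : K[X])) ⊆
      (Finset.univ ×ˢ Finset.range (m + 1)) \ Z := by
    intro p hp
    rw [mem_coeffSupport] at hp
    rw [Finset.mem_sdiff, Finset.mem_product, Finset.mem_range]
    refine ⟨⟨Finset.mem_univ _, ?_⟩, fun hpZ => hp ?_⟩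
    · by_contra! hle
      refine hp ?_
      rw [encode, finsetSum_coeff]
      refine Finset.sum_eq_zero fun i _ => ?_
      by_cases hvi : (v i : K[X]) = 0
      · simp [hvi]
      refine coeff_eq_zero_of_natDegree_lt (natDegree_mul_le.trans_lt ?_)
      have h₁ := (natDegree_lt_iff_degree_lt hvi).2 (mem_degreeLT.1 (v i).2)
      have h₂ : (G i p.1).natDegree ≤ rowDeg G i :=
        Finset.le_sup (f := fun j => (G i j).natDegree) (Finset.mem_univ p.1)
      lia
    · have := congrFun (LinearMap.mem_ker.1 hv) ⟨p, hpZ⟩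
      simpa [f, encode] using this
  rw [← card_coeffSupport]
  refine (Finset.card_le_card hsub).trans ?_
  rw [Finset.card_sdiff_of_subset hZ, hZc, Finset.card_product, Finset.card_univ, Fintype.card_fin,
    Finset.card_range]
  lia

/-- A matrix with injective `mulVec` has a nonsingular maximal square submatrix. -/
theorem exists_submatrix_det_ne_zero {r s : Type*} [Fintype r] [Fintype s] [DecidableEq s]
    {A : Matrix r s K} (hA : ∀ v, A.mulVec v = 0 → v = 0) :
    ∃ f : s → r, (A.submatrix f id).det ≠ 0 := by
  obtain ⟨κ, a, ha, hspan, hli⟩ := exists_linearIndependent' K A.row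
  have : Finite κ := Finite.of_injective a ha
  have := Fintype.ofFinite κ
  have hinj : Function.Injective A.mulVecLin := by
    rw [← LinearMap.ker_eq_bot, LinearMap.ker_eq_bot']
    exact hA
  have hcard : Fintype.card s = Fintype.card κ := by
    rw [← finrank_span_eq_card hli, hspan, ← Matrix.rank_eq_finrank_span_row, Matrix.rank,
      LinearMap.finrank_range_of_inj hinj, Module.finrank_fintype_fun_eq_card]
  let e := Fintype.equivOfCardEq hcard
  refine ⟨a ∘ e, fun h => ?_⟩
  have hrow : LinearIndependent K (A.submatrix (a ∘ e) id).row := hli.comp e e.injective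
  exact (Matrix.linearIndependent_rows_iff_isUnit.1 hrow).map Matrix.detMonoidHom |>.ne_zero h

theorem le_of_isBasic {G : Fin k → Fin n → K[X]} (hG : IsBasic G) : k ≤ n := by
  by_contra! hlt
  have hempty : maximalMinors G = ∅ := Set.eq_empty_of_forall_notMem fun p ⟨φ, _⟩ => by
    have := Fintype.card_le_of_embedding φ
    simp at this
    lia
  rw [IsBasic, hempty, Ideal.span_empty] at hG
  exact bot_ne_top hG

end Field

section Family

variable {F : Type*} [Field F] {k n : ℕ}

/-- The member of the family `𝒢` at the parameter `α`. -/
noncomputable abbrev familyAt (𝒢 : Fin k → Fin n → F[X][X]) {E : Type*} [Field E] [Algebra F E]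
    (α : E) : Fin k → Fin n → E[X] :=
  fun i => fun j => (𝒢 i j).map (aeval α : F[X] →ₐ[F] E).toRingHom

/-- The matrix of the map sending the coefficients of a message of degree at most `L` to the
coefficients of its codeword at the positions in `R`. -/
noncomputable def coeffMatrix (𝒢 : Fin k → Fin n → F[X][X]) (L : ℕ) (R : Finset (Fin n × ℕ)) :
    Matrix R (Fin k × Fin (L + 1)) F[X] :=
  Matrix.of fun p x => (X ^ (x.2 : ℕ) * 𝒢 x.1 p.1.1).coeff p.1.2

theorem coeffMatrix_mulVec (𝒢 : Fin k → Fin n → F[X][X]) (L : ℕ) (R : Finset (Fin n × ℕ))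
    {E : Type*} [Field E] [Algebra F E] (α : E) (v : Fin k × Fin (L + 1) → E) (p : R) :
    ((coeffMatrix 𝒢 L R).map (aeval α : F[X] →ₐ[F] E).toRingHom).mulVec v p =
      (encode (familyAt 𝒢 α) (fun i => ∑ s : Fin (L + 1), C (v (i, s)) * X ^ (s : ℕ))
        p.1.1).coeff p.1.2 := by
  rw [encode, finsetSum_coeff, Matrix.mulVec, dotProduct, Fintype.sum_prod_type]
  refine Finset.sum_congr rfl fun i _ => ?_
  rw [Finset.sum_mul, finsetSum_coeff]
  refine Finset.sum_congr rfl fun s _ => ?_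
  rw [mul_assoc, coeff_C_mul, mul_comm, Matrix.map_apply, coeffMatrix, Matrix.of_apply,
    ← coeff_map, Polynomial.map_mul, Polynomial.map_pow, map_X]

theorem coeff_sum_C_mul_X_pow {E : Type*} [Field E] {L : ℕ} (v : Fin (L + 1) → E)
    (s : Fin (L + 1)) : (∑ s, C (v s) * X ^ (s : ℕ) : E[X]).coeff s = v s := by
  simp [finsetSum_coeff, coeff_C_mul, coeff_X_pow, Fin.val_inj]

/-- If at one parameter no nonzero message of degree at most `L` has a codeword vanishing on `R`,
then the parameters with such a message are roots of a fixed nonzero polynomial. -/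
theorem exists_polynomial_vanishing (𝒢 : Fin k → Fin n → F[X][X]) (L : ℕ)
    (R : Finset (Fin n × ℕ)) {E₀ : Type*} [Field E₀] [Algebra F E₀] (α₀ : E₀)
    (h₀ : ∀ u : Fin k → E₀[X], (∀ i, (u i).natDegree ≤ L) →
      (∀ p ∈ R, (encode (familyAt 𝒢 α₀) u p.1).coeff p.2 = 0) → u = 0) :
    ∃ P : F[X], P ≠ 0 ∧ ∀ (E : Type) [Field E] [Algebra F E] (α : E) (u : Fin k → E[X]), u ≠ 0 →
      (∀ i, (u i).natDegree ≤ L) →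
      (∀ p ∈ R, (encode (familyAt 𝒢 α) u p.1).coeff p.2 = 0) → aeval α P = 0 := by
  have hinj : ∀ v, ((coeffMatrix 𝒢 L R).map (aeval α₀ : F[X] →ₐ[F] E₀).toRingHom).mulVec v = 0 →
      v = 0 := fun v hv => by
    have hu := h₀ (fun i => ∑ s : Fin (L + 1), C (v (i, s)) * X ^ (s : ℕ))
      (fun i => natDegree_sum_le_of_forall_le _ _ fun s _ =>
        (natDegree_C_mul_X_pow_le _ _).trans (Nat.lt_succ_iff.1 s.2))
      (fun p hp => by rw [← coeffMatrix_mulVec 𝒢 L R α₀ v ⟨p, hp⟩, hv, Pi.zero_apply])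
    ext ⟨i, s⟩
    rw [← coeff_sum_C_mul_X_pow (fun s => v (i, s)) s, congrFun hu i]
    simp
  obtain ⟨f, hf⟩ := exists_submatrix_det_ne_zero hinj
  refine ⟨((coeffMatrix 𝒢 L R).submatrix f id).det, fun h => hf ?_, ?_⟩
  · have := RingHom.map_det (aeval α₀ : F[X] →ₐ[F] E₀).toRingHom
      ((coeffMatrix 𝒢 L R).submatrix f id)
    rw [h, map_zero] at this
    exact this.symm
  · intro E _ _ α u hu hL hR
    refine (RingHom.map_det (aeval α : F[X] →ₐ[F] E).toRingHom
      ((coeffMatrix 𝒢 L R).submatrix f id)).trans (Matrix.exists_mulVec_eq_zero_iff.1 ?_)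
    have hsum : (fun i => ∑ s : Fin (L + 1), C ((u i).coeff s) * X ^ (s : ℕ)) = u := by
      ext1 i
      rw [Fin.sum_univ_eq_sum_range fun s => C ((u i).coeff s) * X ^ s]
      exact (as_sum_range_C_mul_X_pow' _ (Nat.lt_succ_iff.2 (hL i))).symm
    refine ⟨fun x => (u x.1).coeff x.2, fun h => hu ?_, ?_⟩
    · rw [← hsum]
      ext1 i
      exact Finset.sum_eq_zero fun s _ => by
        rw [show (u i).coeff s = 0 from congrFun h (i, s), C_0, zero_mul]
    · ext1 x
      have := coeffMatrix_mulVec 𝒢 L R α (fun x => (u x.1).coeff x.2) (f x)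
      rw [hsum, hR _ (f x).2] at this
      exact this

end Family
/-- Let `𝒢(z)` be a one-parameter family of convolutional codes over a
finite field `𝔽`, with parameter space `U(𝔽′) = {α : qᵢ(α) ≠ 0 ∀i}` over each finite
extension `𝔽′` of `𝔽`, all of whose members are canonical of degree `δ`. If for some finite
extension `𝔽″` there is a parameter `α ∈ U(𝔽″)` whose code is MDS, then there exists `N`
bounding, uniformly over all finite extensions `𝔽′` of `𝔽`, the number of parameters
`α ∈ U(𝔽′)` whose code is not MDS. -/
theorem non_MDS_locus_uniformly_bounded {F : Type} [Field F] [Fintype F]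
    {k n δ t : ℕ} (hk : 0 < k)
    (𝒢 : Fin k → Fin n → Polynomial (Polynomial F))
    (q : Fin t → Polynomial F)
    (hcan : ∀ (E : FinFieldExt F) (α : E.carrier), (∀ i, Polynomial.aeval α (q i) ≠ 0) →
      IsCanonical (fun i => fun j => (𝒢 i j).map
        (Polynomial.aeval α : Polynomial F →ₐ[F] E.carrier).toRingHom) ∧
      degCode (fun i => fun j => (𝒢 i j).map
        (Polynomial.aeval α : Polynomial F →ₐ[F] E.carrier).toRingHom) = δ)
    (hex : ∃ (E : FinFieldExt F) (α : E.carrier), (∀ i, Polynomial.aeval α (q i) ≠ 0) ∧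
      freeDist (Submodule.span (Polynomial E.carrier) (Set.range fun i => fun j =>
          (𝒢 i j).map (Polynomial.aeval α : Polynomial F →ₐ[F] E.carrier).toRingHom)) =
        (n - k) * (δ / k + 1) + δ + 1) :
    ∃ N : ℕ, ∀ E : FinFieldExt F,
      Set.ncard {α : E.carrier | (∀ i, Polynomial.aeval α (q i) ≠ 0) ∧
        freeDist (Submodule.span (Polynomial E.carrier) (Set.range fun i => fun j =>
            (𝒢 i j).map (Polynomial.aeval α : Polynomial F →ₐ[F] E.carrier).toRingHom)) ≠
          (n - k) * (δ / k + 1) + δ + 1} ≤ N := by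
  classical
  obtain ⟨E₀, α₀, hα₀, hMDS⟩ := hex
  change freeDist (Submodule.span _ (Set.range (familyAt 𝒢 α₀))) = _ at hMDS
  set D := (n - k) * (δ / k + 1) + δ + 1
  set B := Finset.univ.sup fun x : Fin k × Fin n => (𝒢 x.1 x.2).natDegree
  have hB : ∀ (E : FinFieldExt F) (α : E.carrier) i j, (familyAt 𝒢 α i j).natDegree ≤ B :=
    fun E α i j => natDegree_map_le.trans
      (Finset.le_sup (f := fun x : Fin k × Fin n => (𝒢 x.1 x.2).natDegree) (Finset.mem_univ (i, j)))
  set h := 3 * (k * B) + 1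
  set L := D * (h + B)
  set box := (Finset.univ : Finset (Fin n)) ×ˢ Finset.range (L + B + 1)
  have hbox : ∀ (E : FinFieldExt F) (α : E.carrier) (u : Fin k → E.carrier[X]),
      (∀ i, (u i).natDegree ≤ L) → coeffSupport (encode (familyAt 𝒢 α) u) ⊆ box := by
    intro E α u hu p hp
    refine Finset.mem_product.2 ⟨Finset.mem_univ _, Finset.mem_range_succ_iff.2 ?_⟩
    exact (le_natDegree_of_ne_zero (mem_coeffSupport.1 hp)).trans
      (natDegree_encode_le hu (hB E α) p.1)
  have hinv : ∀ (E : FinFieldExt F) (α : E.carrier), (∀ i, aeval α (q i) ≠ 0) →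
      ∃ H : Fin n → Fin k → E.carrier[X], (∀ j i, (H j i).natDegree ≤ h) ∧
        ∀ u, encode H (encode (familyAt 𝒢 α) u) = u := fun E α hα => by
    obtain ⟨H, hH, hGH⟩ := (hcan E α hα).1.1.exists_right_inverse (hB E α)
    exact ⟨H, fun j i => (hH j i).trans (Nat.le_succ _), hGH⟩
  have hne : ∀ (E : FinFieldExt F) (α : E.carrier), (∀ i, aeval α (q i) ≠ 0) →
      ∀ u, u ≠ 0 → encode (familyAt 𝒢 α) u ≠ 0 := fun E α hα u hu h0 => by
    obtain ⟨H, -, hGH⟩ := hinv E α hα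
    refine hu ?_
    rw [← hGH u, h0]
    ext1 j
    simp [encode]
  have hP : ∀ S : Finset (Fin n × ℕ), S.card < D → ∃ P : F[X], P ≠ 0 ∧
      ∀ (E : Type) [Field E] [Algebra F E] (α : E) (u : Fin k → E[X]), u ≠ 0 →
      (∀ i, (u i).natDegree ≤ L) →
      (∀ p ∈ box \ S, (encode (familyAt 𝒢 α) u p.1).coeff p.2 = 0) → aeval α P = 0 := by
    intro S hS
    refine exists_polynomial_vanishing 𝒢 L (box \ S) α₀ fun u hu hR => ?_
    by_contra hu0
    have hle := hMDS ▸ freeDist_le_of_encode_ne_zero (hne E₀ α₀ hα₀ u hu0)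
    rw [← card_coeffSupport] at hle
    refine absurd (hle.trans (Finset.card_le_card fun p hp => ?_)) (not_le.2 hS)
    by_contra hpS
    exact mem_coeffSupport.1 hp (hR p (Finset.mem_sdiff.2 ⟨hbox E₀ α₀ u hu hp, hpS⟩))
  choose! P hP0 hPα using hP
  set Q := ∏ S ∈ box.powerset.filter (fun S => S.card < D), P S
  have hQ0 : Q ≠ 0 := Finset.prod_ne_zero_iff.2 fun S hS => hP0 S (Finset.mem_filter.1 hS).2
  refine ⟨Q.natDegree, fun E => ?_⟩
  refine (Set.ncard_le_ncard ?_ (rootSet_finite Q E.carrier)).trans (ncard_rootSet_le Q E.carrier)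
  rintro α ⟨hα, hα'⟩
  change freeDist (Submodule.span _ (Set.range (familyAt 𝒢 α))) ≠ D at hα'
  obtain ⟨⟨hbasic, hred⟩, hdeg⟩ := hcan E α hα
  obtain ⟨u, hu0, hu⟩ := exists_polyWeight_encode_le hk (le_of_isBasic hbasic) (hred.trans hdeg)
  have hlt := lt_of_le_of_ne ((freeDist_le_of_encode_ne_zero (hne E α hα u hu0)).trans hu) hα'
  obtain ⟨v, hv0, hv⟩ := exists_encode_of_freeDist_lt (hne E α hα u hu0) hlt
  obtain ⟨H, hH, hGH⟩ := hinv E α hα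
  obtain ⟨w, hw0, hwL, hw⟩ := exists_natDegree_le_of_polyWeight_lt (hB E α) hH (Nat.succ_pos _)
    hGH hv0 hv
  rw [← card_coeffSupport] at hw
  rw [mem_rootSet]
  refine ⟨hQ0, ?_⟩
  rw [map_prod]
  refine Finset.prod_eq_zero
    (Finset.mem_filter.2 ⟨Finset.mem_powerset.2 (hbox E α w hwL), hw⟩) ?_
  refine hPα _ hw E.carrier α w hw0 hwL fun p hp => ?_
  by_contra hpne
  exact (Finset.mem_sdiff.1 hp).2 (mem_coeffSupport.2 hpne)
end

section
/- Let 𝔽 be a finite field, let a₁,…,a_n be pairwise distinct nonzero elements of 𝔽, let b ∈ 𝔽, and let 0 ≤ δ < n. For λ = (λ₀,…,λ_δ) ∈ 𝔽^{δ+1}, λ ≠ 0, set s_λ(t) = Σ_{i=0}^{δ} λ_i t^i and let C_λ ⊆ 𝔽[z]ⁿ be the 𝔽[z]-submodule generated by the row vector 𝒢(z) = (s_λ(a₁z+b), …, s_λ(a_n z+b)). Then d_free(C_λ) = n(δ+1) (i.e. C_λ is an MDS convolutional code of type [n,1,δ]) if and only if s_λ^{(j)}(b) ≠ 0 for every j with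 0 ≤ j ≤ δ, where s_λ^{(j)}(t) = Σ_{r=j}^{δ} binom(r,j) λ_r t^{r−j} is the j-th Hasse derivative of s_λ. -/
open Polynomial

/-- A nonzero polynomial whose coefficients vanish below `lo` and above `hi` has at most `hi - lo`
nonzero roots, so it is nonzero at all but `hi - lo` of the distinct nonzero points `a i`. -/
lemma card_le_card_eval_ne_zero_add {F : Type*} [Field F] [DecidableEq F] {n : ℕ} {a : Fin n → F}
    (ha : ∀ i, a i ≠ 0) (hinj : Function.Injective a) {P : F[X]} (hP : P ≠ 0) {lo hi : ℕ}
    (hlo : ∀ k < lo, P.coeff k = 0) (hhi : P.natDegree ≤ hi) :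
    n ≤ (Finset.univ.filter fun i => P.eval (a i) ≠ 0).card + (hi - lo) := by
  obtain ⟨Q, rfl⟩ := X_pow_dvd_iff.2 hlo
  have hQ : Q ≠ 0 := right_ne_zero_of_mul hP
  have hdeg : Q.natDegree ≤ hi - lo := by
    rw [natDegree_mul (pow_ne_zero _ X_ne_zero) hQ, natDegree_X_pow] at hhi
    omega
  have hroots : (Finset.univ.filter fun i => ¬ (X ^ lo * Q).eval (a i) ≠ 0).card
      ≤ Q.natDegree := by
    rw [← Finset.card_image_of_injective _ hinj]
    refine (Finset.card_le_card (t := Q.roots.toFinset) fun y hy => ?_).trans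
      ((Multiset.toFinset_card_le _).trans (card_roots' Q))
    simp only [Finset.mem_image, Finset.mem_filter] at hy
    obtain ⟨i, ⟨-, hi0⟩, rfl⟩ := hy
    simpa [hQ, ha i] using hi0
  have hcard := Finset.card_filter_add_card_filter_not (s := (Finset.univ : Finset (Fin n)))
    (fun i => (X ^ lo * Q).eval (a i) ≠ 0)
  rw [Finset.card_univ, Fintype.card_fin] at hcard
  omega

lemma sum_range_min_le_sum_range_sub (δ K : ℕ) :
    ∑ m ∈ Finset.range (δ + 1), min m K ≤ ∑ t ∈ Finset.range K, (δ - t) := by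
  induction K with
  | zero => simp
  | succ K ih =>
    rw [Finset.sum_range_succ _ K]
    have hstep : ∑ m ∈ Finset.range (δ + 1), min m (K + 1) ≤
        ∑ m ∈ Finset.range (δ + 1), (min m K + if K + 1 ≤ m then 1 else 0) :=
      Finset.sum_le_sum fun m _ => by split_ifs <;> omega
    have hcard : ((Finset.range (δ + 1)).filter fun m => K + 1 ≤ m).card ≤ δ - K := by
      refine (Finset.card_le_card (t := Finset.Ico (K + 1) (δ + 1)) fun m hm => ?_).trans
        (by simp)
      simp only [Finset.mem_filter, Finset.mem_range, Finset.mem_Ico] at hm ⊢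
      omega
    rw [Finset.sum_add_distrib, ← Finset.card_filter] at hstep
    omega

/-- If the first and last `δ + 1` of the row weights `w 0, …, w (L + δ)` satisfy the MDS-type
bounds, the total weight is at least `n (δ + 1)`. -/
lemma mul_le_sum_range_of_row_bounds {n δ L : ℕ} (hδ : δ < n) (w : ℕ → ℕ)
    (hfirst : ∀ m ≤ δ, n ≤ w m + min m L) (hlast : ∀ t ≤ δ, n ≤ w (L + δ - t) + t) :
    n * (δ + 1) ≤ ∑ m ∈ Finset.range (δ + 1 + L), w m := by
  have hhead : n * (δ + 1) ≤
      ∑ m ∈ Finset.range (δ + 1), w m + ∑ m ∈ Finset.range (δ + 1), min m (min L δ) := by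
    rw [← Finset.sum_add_distrib, mul_comm, ← smul_eq_mul]
    refine le_of_eq_of_le (by simp) (Finset.card_nsmul_le_sum _ _ n fun m hm => ?_)
    have hm' : m ≤ δ := Nat.lt_succ_iff.1 (Finset.mem_range.1 hm)
    have := hfirst m hm'
    omega
  have htail : ∑ t ∈ Finset.range (min L δ), (δ - t) ≤
      ∑ i ∈ Finset.range L, w (δ + 1 + i) := by
    rw [← Finset.sum_range_reflect _ L]
    refine (Finset.sum_le_sum fun t ht => ?_).trans (Finset.sum_le_sum_of_subset
      (Finset.range_subset_range.2 (min_le_left L δ)))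
    have ht' := Finset.mem_range.1 ht
    have := hlast t (by omega)
    rw [show δ + 1 + (L - 1 - t) = L + δ - t by omega]
    omega
  have := sum_range_min_le_sum_range_sub δ (min L δ)
  rw [Finset.sum_range_add]
  omega

lemma coeff_sum_antidiagonal_monomial {F : Type*} [Field F] (α g : F[X]) (m k : ℕ) :
    (∑ x ∈ Finset.HasAntidiagonal.antidiagonal m, monomial x.2 (α.coeff x.1 * g.coeff x.2)).coeff k =
      if k ≤ m then α.coeff (m - k) * g.coeff k else 0 := by
  simp only [finsetSum_coeff, coeff_monomial]
  rw [Finset.Nat.sum_antidiagonal_eq_sum_range_succ_mk, ← Finset.sum_range_reflect]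
  split_ifs with hk
  · rw [Finset.sum_eq_single k]
    · rw [if_pos (by omega)]
      congr 2
      omega
    · intro j hj hjk
      rw [Finset.mem_range] at hj
      exact if_neg (by omega)
    · intro hk'
      exact absurd (Finset.mem_range.2 (by omega)) hk'
  · refine Finset.sum_eq_zero fun j hj => if_neg ?_
    rw [Finset.mem_range] at hj
    omega

lemma coeff_mul_comp_C_mul_X {F : Type*} [Field F] (α g : F[X]) (y : F) (m : ℕ) :
    (α * g.comp (C y * X)).coeff m =
      (∑ x ∈ Finset.HasAntidiagonal.antidiagonal m, monomial x.2 (α.coeff x.1 * g.coeff x.2)).eval y := by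
  simp only [coeff_mul, comp_C_mul_X_coeff, eval_finsetSum, eval_monomial, mul_assoc]

lemma sum_card_coeff_ne_zero_le_polyWeight {F : Type*} [Field F] [DecidableEq F] {n : ℕ}
    (c : Fin n → F[X]) (N M : ℕ) :
    ∑ m ∈ Finset.range M, (Finset.univ.filter fun i => (c i).coeff (N + m) ≠ 0).card
      ≤ polyWeight c := by
  unfold polyWeight
  simp only [Finset.card_filter]
  rw [Finset.sum_comm]
  refine Finset.sum_le_sum fun i _ => ?_
  rw [← Finset.card_filter, ← Finset.card_image_of_injective _ (add_right_injective N)]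
  refine Finset.card_le_card fun k hk => ?_
  simp only [Finset.mem_image, Finset.mem_filter] at hk
  obtain ⟨m, ⟨-, hm⟩, rfl⟩ := hk
  exact mem_support_iff.2 hm

/-- Every nonzero multiple of `(g(a₁z), …, g(a_nz))` has weight at least `n (δ + 1)` when
`g` has degree at most `δ < n` and `δ + 1` nonzero coefficients. -/
lemma mul_le_polyWeight_mul_comp {F : Type*} [Field F] {n δ : ℕ} (hδ : δ < n) {a : Fin n → F}
    (ha : ∀ i, a i ≠ 0) (hinj : Function.Injective a) {g : F[X]} (hdeg : g.natDegree ≤ δ)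
    (hg : ∀ k ≤ δ, g.coeff k ≠ 0) {α : F[X]} (hα : α ≠ 0) :
    n * (δ + 1) ≤ polyWeight fun i => α * g.comp (C (a i) * X) := by
  classical
  set N := α.natTrailingDegree with hN
  have hND : N ≤ α.natDegree := natTrailingDegree_le_natDegree α
  obtain ⟨L, hL⟩ := Nat.exists_eq_add_of_le hND
  have hlow : α.coeff N ≠ 0 := by simpa [hN] using hα
  have hhigh : α.coeff (N + L) ≠ 0 := by simpa [← hL] using hα
  have hgt : ∀ k, δ < k → g.coeff k = 0 := fun k hk =>
    coeff_eq_zero_of_natDegree_lt (hdeg.trans_lt hk)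
  have hαlow : ∀ k < N, α.coeff k = 0 := fun k hk => coeff_eq_zero_of_lt_natTrailingDegree hk
  have hαhigh : ∀ k, N + L < k → α.coeff k = 0 := fun k hk =>
    coeff_eq_zero_of_natDegree_lt (hL ▸ hk)
  refine le_trans ?_ (sum_card_coeff_ne_zero_le_polyWeight _ N (δ + 1 + L))
  simp only [coeff_mul_comp_C_mul_X]
  refine mul_le_sum_range_of_row_bounds hδ _ (fun m hm => ?_) fun t ht => ?_
  · rw [show min m L = m - (m - L) by omega]
    refine card_le_card_eval_ne_zero_add ha hinj (fun h0 => ?_) (fun k hk => ?_)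
      (natDegree_le_iff_coeff_eq_zero.2 fun k hk => ?_)
    · have := congrArg (coeff · m) h0
      simp only [coeff_sum_antidiagonal_monomial, coeff_zero] at this
      rw [if_pos (by omega), Nat.add_sub_cancel] at this
      exact mul_ne_zero hlow (hg m hm) this
    · rw [coeff_sum_antidiagonal_monomial, hαhigh _ (by omega), zero_mul, ite_self]
    · rw [coeff_sum_antidiagonal_monomial]
      split_ifs with hk'
      · rw [hαlow _ (by omega), zero_mul]
      · rfl
  · refine (card_le_card_eval_ne_zero_add (lo := δ - t) (hi := δ) ha hinj (fun h0 => ?_)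
      (fun k hk => ?_) (natDegree_le_iff_coeff_eq_zero.2 fun k hk => ?_)).trans_eq
      (congrArg _ (Nat.sub_sub_self ht))
    · have := congrArg (coeff · (δ - t)) h0
      simp only [coeff_sum_antidiagonal_monomial, coeff_zero] at this
      rw [if_pos (by omega), show N + (L + δ - t) - (δ - t) = N + L by omega] at this
      exact mul_ne_zero hhigh (hg _ (Nat.sub_le _ _)) this
    · rw [coeff_sum_antidiagonal_monomial, hαhigh _ (by omega), zero_mul, ite_self]
    · rw [coeff_sum_antidiagonal_monomial, hgt k hk, mul_zero, ite_self]

lemma polyWeight_comp_C_mul_X {F : Type*} [Field F] {n : ℕ} {a : Fin n → F}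
    (ha : ∀ i, a i ≠ 0) (g : F[X]) :
    (polyWeight fun i => g.comp (C (a i) * X)) = n * g.support.card := by
  have hsupp : ∀ i, (g.comp (C (a i) * X)).support = g.support := fun i => by
    ext k
    simp [comp_C_mul_X_coeff, ha i]
  simp [polyWeight, hsupp]

/-- The code generated by `(g(a₁z), …, g(a_nz))` with `g ≠ 0` of degree at most `δ < n` is MDS
if and only if the coefficients of `g` up to degree `δ` are all nonzero. -/
lemma freeDist_span_comp_C_mul_X_eq_iff {F : Type*} [Field F] {n δ : ℕ} (hδ : δ < n)
    {a : Fin n → F} (ha : ∀ i, a i ≠ 0) (hinj : Function.Injective a) {g : F[X]} (hg0 : g ≠ 0)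
    (hdeg : g.natDegree ≤ δ) :
    freeDist (Submodule.span F[X] {fun i => g.comp (C (a i) * X)}) = n * (δ + 1) ↔
      ∀ k ≤ δ, g.coeff k ≠ 0 := by
  set G : Fin n → F[X] := fun i => g.comp (C (a i) * X) with hGdef
  have hn : 0 < n := by omega
  have hsub : g.support ⊆ Finset.range (δ + 1) := fun k hk =>
    Finset.mem_range.2 (Nat.lt_succ_iff.2 ((le_natDegree_of_mem_supp k hk).trans hdeg))
  have hweight : polyWeight G = n * g.support.card := polyWeight_comp_C_mul_X ha g
  have hG : G ≠ 0 := by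
    intro h
    have : n * g.support.card = 0 := by rw [← hweight, h]; simp [polyWeight]
    rcases Nat.mul_eq_zero.1 this with h | h
    · omega
    · exact hg0 (by simpa using h)
  have hmem : polyWeight G ∈
      {d | ∃ c ∈ Submodule.span F[X] {G}, c ≠ 0 ∧ polyWeight c = d} :=
    ⟨G, Submodule.mem_span_singleton_self G, hG, rfl⟩
  have hle : freeDist (Submodule.span F[X] {G}) ≤ n * g.support.card :=
    (Nat.sInf_le hmem).trans_eq hweight
  constructor
  · intro h k hk
    rw [h] at hle
    have hcard : δ + 1 ≤ g.support.card := Nat.le_of_mul_le_mul_left hle hn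
    have heq : g.support = Finset.range (δ + 1) :=
      Finset.eq_of_subset_of_card_le hsub (by simpa using hcard)
    exact mem_support_iff.1 (heq ▸ Finset.mem_range.2 (by omega))
  · intro h
    refine le_antisymm (hle.trans (Nat.mul_le_mul_left n ?_)) (le_csInf ⟨_, hmem⟩ ?_)
    · simpa using Finset.card_le_card hsub
    · rintro _ ⟨c, hc, hc0, rfl⟩
      obtain ⟨α, rfl⟩ := Submodule.mem_span_singleton.1 hc
      exact mul_le_polyWeight_mul_comp hδ ha hinj hdeg h (left_ne_zero_of_smul hc0)

/-- The 1-dimensional convolutional Goppa code generated by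
`(s_λ(a₁z+b), …, s_λ(a_nz+b))`, for pairwise distinct nonzero `a_i` and `0 ≤ δ < n`,
is MDS (i.e. `d_free = n(δ+1)`) if and only if every Hasse derivative `s_λ^{(j)}(b)`,
`0 ≤ j ≤ δ`, is nonzero. -/
theorem goppa_MDS_iff_hasseDeriv_ne_zero {F : Type*} [Field F] [Fintype F] {n δ : ℕ}
    (hδ : δ < n)
    (a : Fin n → F) (ha : ∀ i, a i ≠ 0) (hinj : Function.Injective a)
    (b : F) (lam : Fin (δ + 1) → F) (hlam : lam ≠ 0) :
    freeDist (Submodule.span (Polynomial F)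
        {fun j : Fin n => (∑ i : Fin (δ + 1), Polynomial.C (lam i) * Polynomial.X ^ (i : ℕ)).comp
          (Polynomial.C (a j) * Polynomial.X + Polynomial.C b)}) = n * (δ + 1)
      ↔ ∀ j : Fin (δ + 1),
        (Polynomial.hasseDeriv (j : ℕ)
          (∑ i : Fin (δ + 1), Polynomial.C (lam i) * Polynomial.X ^ (i : ℕ))).eval b ≠ 0 := by
  set s : F[X] := ∑ i : Fin (δ + 1), C (lam i) * X ^ (i : ℕ) with hs
  have hcoeff : ∀ i : Fin (δ + 1), s.coeff i = lam i := fun i => by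
    simp [hs, finsetSum_coeff, coeff_X_pow, Fin.val_inj]
  have hs0 : s ≠ 0 := fun h => hlam (funext fun i => by simp [← hcoeff, h])
  have hdeg : s.natDegree ≤ δ := natDegree_sum_le_of_forall_le _ _ fun i _ =>
    (natDegree_C_mul_X_pow_le _ _).trans (Nat.lt_succ_iff.1 i.2)
  have hcomp : ∀ j, s.comp (C (a j) * X + C b) = (taylor b s).comp (C (a j) * X) := fun j => by
    simp [taylor_apply, comp_assoc]
  simp only [hcomp]
  rw [freeDist_span_comp_C_mul_X_eq_iff hδ ha hinj ((taylor_eq_zero b s).not.2 hs0)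
    ((natDegree_taylor s b).trans_le hdeg)]
  simp only [taylor_coeff]
  exact ⟨fun h j => h j (Nat.lt_succ_iff.1 j.2), fun h k hk => h ⟨k, Nat.lt_succ_iff.2 hk⟩⟩
end
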